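/- Let −d be a fundamental discriminant. Then d is represented primitively over all ℤ_p by the ternary lattices L_i if and only if no prime p dividing N₁ is split in the imaginary quadratic field ℚ(√−d) and no prime p dividing N₂ is inert in ℚ(√−d). -/

import Mathlib

open scoped Quaternion BigOperators Matrix

noncomputable section

namespace Rep

/-! ### Integral binary quadratic forms, class numbers, fundamental discriminants -/

/-- `T` is the matrix of an integral binary quadratic form, i.e. an integral symmetric
matrix `T = (2a, b; b, 2c)` (even diagonal). -/
def IsBinaryMatrix (T : Matrix (Fin 2) (Fin 2) ℤ) : Prop :=
  T 0 1 = T 1 0 ∧ (2 ∣ T 0 0) ∧ (2 ∣ T 1 1)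

/-- The signed discriminant `b² - 4ac` of `T = (2a, b; b, 2c)`. -/
def disc (T : Matrix (Fin 2) (Fin 2) ℤ) : ℤ := T 0 1 ^ 2 - T 0 0 * T 1 1

/-- `T = (2a, b; b, 2c)` is positive definite. -/
def PosDefBinary (T : Matrix (Fin 2) (Fin 2) ℤ) : Prop := 0 < T 0 0 ∧ disc T < 0

/-- `ε(T)`: the number of proper automorphs `U ∈ SL₂(ℤ)`, `UᵀTU = T`, of `T`. -/
def autCount (T : Matrix (Fin 2) (Fin 2) ℤ) : ℕ :=
  Set.ncard {U : Matrix.SpecialLinearGroup (Fin 2) ℤ |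
    (U : Matrix (Fin 2) (Fin 2) ℤ)ᵀ * T * U = T}

/-- proper (`SL₂(ℤ)`-) equivalence of binary forms. -/
def SLEquiv (T T' : Matrix (Fin 2) (Fin 2) ℤ) : Prop :=
  ∃ U : Matrix.SpecialLinearGroup (Fin 2) ℤ, (U : Matrix (Fin 2) (Fin 2) ℤ)ᵀ * T * U = T'

/-- Gauss-reduced positive definite binary form `(2a, b; b, 2c)`:
`-a < b ≤ a ≤ c`, and `b ≥ 0` if `a = c`. -/
def IsReduced (T : Matrix (Fin 2) (Fin 2) ℤ) : Prop :=
  -(T 0 0) < 2 * T 0 1 ∧ 2 * T 0 1 ≤ T 0 0 ∧ T 0 0 ≤ T 1 1 ∧ (T 0 0 = T 1 1 → 0 ≤ T 0 1)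

/-- A canonical set of representatives for the `SL₂(ℤ)`-equivalence classes of positive
definite integral binary quadratic forms of discriminant `-d`: the reduced forms. -/
def reducedForms (d : ℤ) : Set (Matrix (Fin 2) (Fin 2) ℤ) :=
  {T | IsBinaryMatrix T ∧ PosDefBinary T ∧ disc T = -d ∧ IsReduced T}

/-- The class number `h(-d)`: the number of `SL₂(ℤ)`-classes of primitive positive definite
integral binary quadratic forms of discriminant `-d`; for a fundamental discriminant `-d`
this is the class number of `ℚ(√-d)`. -/
def classNumber (d : ℤ) : ℕ :=
  Set.ncard {T | T ∈ reducedForms d ∧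
    Int.gcd (Int.gcd (T 0 0 / 2) (T 0 1)) (T 1 1 / 2) = 1}

/-- `σ₀(n)`, the number of divisors of `n`. -/
def sigma0 (n : ℕ) : ℕ := n.divisors.card

/-- `D` is a fundamental discriminant (the discriminant of the ring of integers of a
quadratic field). -/
def IsFundamentalDiscriminant (D : ℤ) : Prop :=
  D ≠ 1 ∧ ((D % 4 = 1 ∧ Squarefree D) ∨
    (D % 4 = 0 ∧ Squarefree (D / 4) ∧ (D / 4 % 4 = 2 ∨ D / 4 % 4 = 3)))

/-! ### Quadratic lattices via Gram matrices: representation numbers, genus, spinor genus -/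

/-- The number of representations of the binary form with (bilinear) Gram matrix `T` by the
quadratic lattice with (bilinear) Gram matrix `A`. -/
def rMat {m : ℕ} (A : Matrix (Fin m) (Fin m) ℤ) (T : Matrix (Fin 2) (Fin 2) ℤ) : ℕ :=
  Set.ncard {X : Matrix (Fin m) (Fin 2) ℤ | Xᵀ * A * X = T}

/-- The number of representations of the integer `t` by the quadratic form `q(x) = (xᵀAx)/2`
with bilinear Gram matrix `A`. -/
def rQuad {m : ℕ} (A : Matrix (Fin m) (Fin m) ℤ) (t : ℤ) : ℕ :=
  Set.ncard {x : Fin m → ℤ | x ⬝ᵥ A.mulVec x = 2 * t}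

/-- The order of the automorphism group of the lattice with Gram matrix `A`. -/
def autMat {m : ℕ} (A : Matrix (Fin m) (Fin m) ℤ) : ℕ :=
  Set.ncard {U : Matrix (Fin m) (Fin m) ℤ | Uᵀ * A * U = A}

/-- Integral equivalence (isometry) of Gram matrices. -/
def ZEquiv {m : ℕ} (A B : Matrix (Fin m) (Fin m) ℤ) : Prop :=
  ∃ U : Matrix (Fin m) (Fin m) ℤ, IsUnit U.det ∧ Uᵀ * A * U = B

/-- Equivalence of Gram matrices over the `p`-adic integers `ℤ_p`. -/
def ZpEquiv {m : ℕ} (p : ℕ) (hp : p.Prime) (A B : Matrix (Fin m) (Fin m) ℤ) : Prop :=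
  have : Fact p.Prime := ⟨hp⟩
  ∃ U : Matrix (Fin m) (Fin m) ℤ_[p], IsUnit U.det ∧
    Uᵀ * A.map (Int.cast : ℤ → ℤ_[p]) * U = B.map (Int.cast : ℤ → ℤ_[p])

/-- `A` is positive definite (over `ℝ`). -/
def PosDefMat {m : ℕ} (A : Matrix (Fin m) (Fin m) ℤ) : Prop :=
  (A.map (Int.cast : ℤ → ℝ)).PosDef

/-- Two positive definite integral lattices are in the same genus iff they are equivalent
over all `ℤ_p` (and over `ℝ`, which is automatic for positive definite ones). -/
def InSameGenus {m : ℕ} (A B : Matrix (Fin m) (Fin m) ℤ) : Prop :=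
  PosDefMat A ∧ PosDefMat B ∧ ∀ (p : ℕ) (hp : p.Prime), ZpEquiv p hp A B

/-- The reflection in the vector `v` of the quadratic space with Gram matrix `A`. -/
def reflMat {K : Type*} [Field K] {m : ℕ} (A : Matrix (Fin m) (Fin m) K) (v : Fin m → K) :
    Matrix (Fin m) (Fin m) K :=
  1 - (2 / (v ⬝ᵥ A.mulVec v)) • (Matrix.vecMulVec v v * A)

/-- `U` is a rotation (proper isometry) of the quadratic space with Gram matrix `A`
with spinor norm (represented by) `θ`: `U` is a product of an even number of reflections
in anisotropic vectors `v l`, and `θ = ∏ q(v l)`. -/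
def IsRotationWithSpinorNorm {K : Type*} [Field K] {m : ℕ} (A U : Matrix (Fin m) (Fin m) K)
    (θ : K) : Prop :=
  ∃ (r : ℕ) (v : Fin r → (Fin m → K)), Even r ∧ (∀ l, v l ⬝ᵥ A.mulVec (v l) ≠ 0) ∧
    U = (List.ofFn fun l => reflMat A (v l)).prod ∧
    θ = ∏ l : Fin r, (v l ⬝ᵥ A.mulVec (v l)) / 2

/-- The lattices with Gram matrices `A` and `B` lie in the same spinor genus: there is a
rational isometry `S` of `A` and a rational equivalence `C` from `A` to `B` which at every
prime `p` factors as `S` times a rotation of trivial spinor norm times a `ℤ_p`-unit. -/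
def SameSpinorGenus {m : ℕ} (A B : Matrix (Fin m) (Fin m) ℤ) : Prop :=
  InSameGenus A B ∧
  ∃ C S : Matrix (Fin m) (Fin m) ℚ,
    Cᵀ * A.map (Int.cast : ℤ → ℚ) * C = B.map (Int.cast : ℤ → ℚ) ∧
    Sᵀ * A.map (Int.cast : ℤ → ℚ) * S = A.map (Int.cast : ℤ → ℚ) ∧
    ∀ (p : ℕ) (hp : p.Prime),
      have : Fact p.Prime := ⟨hp⟩
      ∃ (Sig : Matrix (Fin m) (Fin m) ℚ_[p]) (θ c : ℚ_[p]) (U : Matrix (Fin m) (Fin m) ℤ_[p]),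
        IsRotationWithSpinorNorm (A.map (Int.cast : ℤ → ℚ_[p])) Sig θ ∧ c ≠ 0 ∧ θ = c ^ 2 ∧
        IsUnit U.det ∧
        C.map (Rat.cast : ℚ → ℚ_[p]) =
          S.map (Rat.cast : ℚ → ℚ_[p]) * Sig * U.map (fun x : ℤ_[p] => (x : ℚ_[p]))

/-- A system of representatives for the isometry classes of lattices in the genus of `A`. -/
structure GenusReps {m : ℕ} (A : Matrix (Fin m) (Fin m) ℤ) where
  reps : Finset (Matrix (Fin m) (Fin m) ℤ)
  mem_genus : ∀ B ∈ reps, InSameGenus A B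
  complete : ∀ B, InSameGenus A B → ∃ C ∈ reps, ZEquiv C B
  inequiv : ∀ B ∈ reps, ∀ C ∈ reps, ZEquiv B C → B = C

/-- The mass `μ` of the genus of `A`. -/
def mass {m : ℕ} {A : Matrix (Fin m) (Fin m) ℤ} (G : GenusReps A) : ℝ :=
  ∑ B ∈ G.reps, (1 : ℝ) / autMat B

/-- Siegel's weighted average `r(gen(A), T)` of the representation numbers of the binary
form `T` over the classes in the genus of `A`. -/
def genusAvgBinary {m : ℕ} {A : Matrix (Fin m) (Fin m) ℤ} (G : GenusReps A)
    (T : Matrix (Fin 2) (Fin 2) ℤ) : ℝ :=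
  (∑ B ∈ G.reps, (rMat B T : ℝ) / autMat B) / mass G

/-- Siegel's weighted average `r(gen(A), t)` of the representation numbers of the integer
`t` over the classes in the genus of `A`. -/
def genusAvgQuad {m : ℕ} {A : Matrix (Fin m) (Fin m) ℤ} (G : GenusReps A) (t : ℤ) : ℝ :=
  (∑ B ∈ G.reps, (rQuad B t : ℝ) / autMat B) / mass G

/-- `o_max`: the maximal order of the automorphism group of a lattice in the genus of `A`. -/
def oMax {m : ℕ} {A : Matrix (Fin m) (Fin m) ℤ} (G : GenusReps A) : ℕ :=
  G.reps.sup autMat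

/-- `ℓ • A⁻¹` is again integral with even diagonal. -/
def EvenIntegralScaledInv {m : ℕ} (A : Matrix (Fin m) (Fin m) ℤ) (ℓ : ℕ) : Prop :=
  (∀ i j, ∃ c : ℤ, (ℓ : ℚ) * (A.map (Int.cast : ℤ → ℚ))⁻¹ i j = c) ∧
    ∀ i, ∃ c : ℤ, (ℓ : ℚ) * (A.map (Int.cast : ℤ → ℚ))⁻¹ i i = 2 * c

/-- `ℓ` is the level of the (even) lattice with bilinear Gram matrix `A`. -/
def IsLevelOf {m : ℕ} (A : Matrix (Fin m) (Fin m) ℤ) (ℓ : ℕ) : Prop :=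
  0 < ℓ ∧ EvenIntegralScaledInv A ℓ ∧
    ∀ ℓ' : ℕ, 0 < ℓ' → EvenIntegralScaledInv A ℓ' → ℓ ∣ ℓ'

/-- `d` is represented primitively by (the `ℤ_p`-completion of) the ternary lattice with Gram
matrix `A` over every `ℤ_p`. -/
def LocallyPrimitivelyRepresents (A : Matrix (Fin 3) (Fin 3) ℤ) (d : ℤ) : Prop :=
  ∀ (p : ℕ) (hp : p.Prime),
    have : Fact p.Prime := ⟨hp⟩
    ∃ x : Fin 3 → ℤ_[p], (∃ i, IsUnit (x i)) ∧
      x ⬝ᵥ (A.map (Int.cast : ℤ → ℤ_[p])).mulVec x = ((2 * d : ℤ) : ℤ_[p])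

/-- `d` is represented by the ternary lattice with Gram matrix `A` over every `ℤ_p`. -/
def LocallyRepresents (A : Matrix (Fin 3) (Fin 3) ℤ) (d : ℤ) : Prop :=
  ∀ (p : ℕ) (hp : p.Prime),
    have : Fact p.Prime := ⟨hp⟩
    ∃ x : Fin 3 → ℤ_[p], x ⬝ᵥ (A.map (Int.cast : ℤ → ℤ_[p])).mulVec x = ((2 * d : ℤ) : ℤ_[p])

/-- The prime `p` is split in the imaginary quadratic field `ℚ(√-d)`. -/
def SplitIn (d : ℤ) (p : ℕ) (hp : p.Prime) : Prop :=
  if p = 2 then (-d) % 8 = 1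
  else
    have : Fact p.Prime := ⟨hp⟩
    legendreSym p (-d) = 1

/-- The prime `p` is inert in the imaginary quadratic field `ℚ(√-d)`. -/
def InertIn (d : ℤ) (p : ℕ) (hp : p.Prime) : Prop :=
  if p = 2 then (-d) % 8 = 5
  else
    have : Fact p.Prime := ⟨hp⟩
    legendreSym p (-d) = -1

end Rep
namespace Rep

/-! ### Quaternion algebras over ℚ, Eichler orders, ideal classes -/

/-- The reduced trace of a quaternion. -/
def trd {a b : ℚ} (x : ℍ[ℚ, a, b]) : ℚ := 2 * x.re

/-- The reduced norm `n` of a quaternion. -/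
def nrd {a b : ℚ} (x : ℍ[ℚ, a, b]) : ℚ := (x * star x).re

/-- The bilinear form `b(x, y) = tr(x ȳ)` associated to the reduced norm form;
note `b(x, x) = 2 n(x)`. -/
def qbil {a b : ℚ} (x y : ℍ[ℚ, a, b]) : ℚ := (x * star y + y * star x).re

/-- The quaternion algebra `(a, b / ℚ)` is ramified at infinity, i.e. `ℍ[ℝ, a, b]` is a
division algebra. -/
def RamifiedAtInfinity (a b : ℚ) : Prop :=
  ∀ x : ℍ[ℝ, (a : ℝ), (b : ℝ)], x ≠ 0 → IsUnit x

/-- The quaternion algebra `(a, b / ℚ)` is ramified at the prime `p`, i.e. `ℍ[ℚ_p, a, b]`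
is a division algebra. -/
def RamifiedAt (a b : ℚ) (p : ℕ) (hp : p.Prime) : Prop :=
  have : Fact p.Prime := ⟨hp⟩
  ∀ x : ℍ[ℚ_[p], (a : ℚ_[p]), (b : ℚ_[p])], x ≠ 0 → IsUnit x

/-- `M` is a full `ℤ`-lattice of rank `m` in the quaternion algebra. -/
def IsLattice {a b : ℚ} (m : ℕ) (M : Submodule ℤ ℍ[ℚ, a, b]) : Prop :=
  ∃ v : Fin m → ℍ[ℚ, a, b], LinearIndependent ℚ v ∧ Submodule.span ℤ (Set.range v) = M

/-- `A` is a Gram matrix (with respect to the bilinear form `b(x,y) = tr(x ȳ)`) of a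
`ℤ`-basis of (the `ℤ`-span of) `M`. -/
def IsGramOf {a b : ℚ} {m : ℕ} (M : Set ℍ[ℚ, a, b]) (A : Matrix (Fin m) (Fin m) ℤ) : Prop :=
  ∃ v : Fin m → ℍ[ℚ, a, b], LinearIndependent ℚ v ∧
    Submodule.span ℤ (Set.range v) = Submodule.span ℤ M ∧
    ∀ i j, (A i j : ℚ) = qbil (v i) (v j)

/-- `A` is a Gram matrix of `M` for the quadratic form rescaled by the factor `s`. -/
def IsGramOfScaled {a b : ℚ} {m : ℕ} (s : ℕ) (M : Set ℍ[ℚ, a, b])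
    (A : Matrix (Fin m) (Fin m) ℤ) : Prop :=
  ∃ v : Fin m → ℍ[ℚ, a, b], LinearIndependent ℚ v ∧
    Submodule.span ℤ (Set.range v) = Submodule.span ℤ M ∧
    ∀ i j, (A i j : ℚ) = s * qbil (v i) (v j)

/-- An order in the quaternion algebra: a full lattice which is a subring. -/
def IsOrder {a b : ℚ} (O : Submodule ℤ ℍ[ℚ, a, b]) : Prop :=
  IsLattice 4 O ∧ (1 : ℍ[ℚ, a, b]) ∈ O ∧ ∀ x ∈ O, ∀ y ∈ O, x * y ∈ O

/-- The left order of a lattice `I`. -/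
def leftOrderSet {a b : ℚ} (I : Set ℍ[ℚ, a, b]) : Set ℍ[ℚ, a, b] :=
  {x | ∀ y ∈ I, x * y ∈ I}

/-- The right order of a lattice `I`. -/
def rightOrderSet {a b : ℚ} (I : Set ℍ[ℚ, a, b]) : Set ℍ[ℚ, a, b] :=
  {x | ∀ y ∈ I, y * x ∈ I}

/-- The order `O` has reduced discriminant `N`, i.e. the Gram matrix of the norm form on `O`
has determinant `N²`.  For squarefree `N` this characterizes the Eichler orders of level `N`
(hereditary orders). -/
def HasReducedDiscriminant {a b : ℚ} (O : Submodule ℤ ℍ[ℚ, a, b]) (N : ℕ) : Prop :=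
  ∃ A : Matrix (Fin 4) (Fin 4) ℤ, IsGramOf (O : Set ℍ[ℚ, a, b]) A ∧ A.det = (N : ℤ) ^ 2

/-- The pairs `(x, y) ∈ M × M` representing the binary form `T = (2a, b; b, 2c)`, i.e. with
`n(x) = a`, `b(x,y) = b`, `n(y) = c` (equivalently, with bilinear Gram matrix `T`). -/
def repPairs {a b : ℚ} (M : Set ℍ[ℚ, a, b]) (T : Matrix (Fin 2) (Fin 2) ℤ) :
    Set (ℍ[ℚ, a, b] × ℍ[ℚ, a, b]) :=
  {xy | xy.1 ∈ M ∧ xy.2 ∈ M ∧ qbil xy.1 xy.1 = T 0 0 ∧ qbil xy.1 xy.2 = T 0 1 ∧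
    qbil xy.2 xy.2 = T 1 1}

/-- `r(M, T)`: the number of representations of the binary form `T` by the quaternary
lattice `M` (with the reduced norm as quadratic form). -/
def rLat {a b : ℚ} (M : Set ℍ[ℚ, a, b]) (T : Matrix (Fin 2) (Fin 2) ℤ) : ℕ :=
  Set.ncard (repPairs M T)

/-- As `rLat`, but with the quadratic form rescaled by the factor `s`. -/
def rLatScaled {a b : ℚ} (s : ℕ) (M : Set ℍ[ℚ, a, b]) (T : Matrix (Fin 2) (Fin 2) ℤ) : ℕ :=
  Set.ncard {xy : ℍ[ℚ, a, b] × ℍ[ℚ, a, b] | xy.1 ∈ M ∧ xy.2 ∈ M ∧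
    (s : ℚ) * qbil xy.1 xy.1 = T 0 0 ∧ (s : ℚ) * qbil xy.1 xy.2 = T 0 1 ∧
    (s : ℚ) * qbil xy.2 xy.2 = T 1 1}

/-- The averaged representation number `r(M, d) = Σ_T r(M, T)/ε(T)`, the sum over the
`SL₂(ℤ)`-classes of integral binary forms of discriminant `-d`. -/
def rAvg {a b : ℚ} (M : Set ℍ[ℚ, a, b]) (d : ℤ) : ℝ :=
  ∑ᶠ T ∈ reducedForms d, (rLat M T : ℝ) / autCount T

/-- The dual lattice `M^#` of `M` with respect to `b(x,y) = tr(x ȳ)`. -/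
def dualLattice {a b : ℚ} (M : Set ℍ[ℚ, a, b]) : Set ℍ[ℚ, a, b] :=
  {x | ∀ y ∈ M, ∃ m : ℤ, qbil x y = m}

/-- The partial localization `M[1/s]` of `M`. -/
def locInv {a b : ℚ} (s : ℕ) (M : Submodule ℤ ℍ[ℚ, a, b]) : Set ℍ[ℚ, a, b] :=
  {x | ∃ k : ℕ, ((s : ℚ) ^ k) • x ∈ M}

/-- The data of an Eichler order `R` of squarefree level `N = N₁N₂` in the (definite)
quaternion algebra over `ℚ` ramified exactly at `∞` and the primes dividing `N₁`, together
with the ideals `I_ij = y_i R y_j⁻¹` coming from a double coset decomposition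
`D^×_𝔸 = ∪_j D^× y_j R^×_𝔸` (equivalently: a complete system of representatives of the
left ideal classes and their linking ideals), normalized to have reduced norm `ℤ`. -/
structure EichlerSetting (N₁ N₂ : ℕ) where
  a : ℚ
  b : ℚ
  N₁_pos : 0 < N₁
  N₂_pos : 0 < N₂
  squarefree : Squarefree (N₁ * N₂)
  odd_ram : Odd N₁.primeFactors.card
  ram_inf : RamifiedAtInfinity a b
  ram_iff : ∀ (p : ℕ) (hp : p.Prime), RamifiedAt a b p hp ↔ p ∣ N₁
  /-- the class number of the Eichler order -/
  h : ℕ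
  h_pos : 0 < h
  /-- the orders `R_i = y_i R y_i⁻¹`; `R = R_0` -/
  Rord : Fin h → Submodule ℤ ℍ[ℚ, a, b]
  /-- the ideals `I_ij = y_i R y_j⁻¹` -/
  I : Fin h → Fin h → Submodule ℤ ℍ[ℚ, a, b]
  Rord_order : ∀ i, IsOrder (Rord i)
  Rord_disc : ∀ i, HasReducedDiscriminant (Rord i) (N₁ * N₂)
  I_lattice : ∀ i j, IsLattice 4 (I i j)
  I_diag : ∀ i, I i i = Rord i
  I_left : ∀ i j, leftOrderSet (I i j : Set ℍ[ℚ, a, b]) = (Rord i : Set ℍ[ℚ, a, b])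
  I_right : ∀ i j, rightOrderSet (I i j : Set ℍ[ℚ, a, b]) = (Rord j : Set ℍ[ℚ, a, b])
  I_nrd_integral : ∀ i j, ∀ x ∈ I i j, ∃ m : ℤ, nrd x = m
  I_nrd_primitive : ∀ i j, (1 : ℚ) ∈ Submodule.span ℤ (nrd '' (I i j : Set ℍ[ℚ, a, b]))
  /-- for fixed `i`, the `I i j` represent all classes of left `R_i`-ideals -/
  classes_complete : ∀ (i : Fin h) (J : Submodule ℤ ℍ[ℚ, a, b]), IsLattice 4 J →
    leftOrderSet (J : Set ℍ[ℚ, a, b]) = (Rord i : Set ℍ[ℚ, a, b]) →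
    ∃ (j : Fin h) (u : (ℍ[ℚ, a, b])ˣ),
      J = Submodule.map (LinearMap.mulRight ℤ (u : ℍ[ℚ, a, b])) (I i j)
  classes_distinct : ∀ (i j j' : Fin h) (u : (ℍ[ℚ, a, b])ˣ),
    I i j' = Submodule.map (LinearMap.mulRight ℤ (u : ℍ[ℚ, a, b])) (I i j) → j = j'

namespace EichlerSetting

variable {N₁ N₂ : ℕ} (S : EichlerSetting N₁ N₂)

/-- The Eichler order `R` itself. -/
def R : Submodule ℤ ℍ[ℚ, S.a, S.b] := S.Rord ⟨0, S.h_pos⟩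

/-- The ternary lattice `L_i = {x ∈ ℤ·1 + 2R_i | tr(x) = 0}`. -/
def L (i : Fin S.h) : Set ℍ[ℚ, S.a, S.b] :=
  {x | (∃ m : ℤ, ∃ r ∈ S.Rord i, x = m • (1 : ℍ[ℚ, S.a, S.b]) + 2 • r) ∧ x + star x = 0}

/-- `e_i`, the number of units of the order `R_i`. -/
def units (i : Fin S.h) : ℕ :=
  Set.ncard {x : ℍ[ℚ, S.a, S.b] | x ∈ S.Rord i ∧ nrd x = 1}

/-- The underlying lattice `I_ij^# ∩ I_ij[1/s]` of the rescaled partial dual `I_ij^{*,s}`. -/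
def pd (i j : Fin S.h) (s : ℕ) : Set ℍ[ℚ, S.a, S.b] :=
  dualLattice (S.I i j : Set ℍ[ℚ, S.a, S.b]) ∩ locInv s (S.I i j)

/-- `r(rpd(I_ij, N'), T) = Σ_{s ∣ N'} r(I_ij^{*,s}, T)`: the total number of representations
of `T` by the rescaled partial duals `I_ij^{*,s}`, `s ∣ N'`. -/
def rRpd (i j : Fin S.h) (N' : ℕ) (T : Matrix (Fin 2) (Fin 2) ℤ) : ℕ :=
  ∑ s ∈ N'.divisors, rLatScaled s (S.pd i j s) T

/-- `r(rpd(I_ij, N'), d) = Σ_{s ∣ N'} r(I_ij^{*,s}, d)`, averaged over the classes of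
binary forms of discriminant `-d`. -/
def rRpdAvg (i j : Fin S.h) (N' : ℕ) (d : ℤ) : ℝ :=
  ∑ᶠ T ∈ reducedForms d, (S.rRpd i j N' T : ℝ) / autCount T

end EichlerSetting

end Rep

namespace Rep

/-!
An order `O` of reduced discriminant `N` is the even Clifford algebra of an integral ternary form
`Q` of half-discriminant `±N`, and the norm form on its lattice of trace zero elements in
`ℤ·1 + 2O` is the adjoint form of `Q`. Concretely, if `f₀, f₁, f₂` is a basis of this lattice, the
structure constants of the products `f₁f₂, f₂f₀, f₀f₁` form the symmetric matrix of `Q`, whose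
adjugate is half of the Gram matrix of `f`.

Over `ℤ_p` the question becomes whether the adjoint of `Q` represents `d`; primitivity is automatic
because `-d` is fundamental. If `p ∤ N`, then `Q` is unimodular and its adjoint represents every `d`
for which `-d` is a discriminant. If `p ∥ N`, then `Q` is a unimodular binary form modulo `p`.
A unit `d` is represented if and only if `-d` and the discriminant of this binary form are both
squares or both nonsquares, while a `d` divisible by `p` is always represented. The discriminant
is a square if and only if the quaternary form `⟨1⟩ ⊥ adj Q`, which over `ℚ_p` is the norm form of
the algebra, is isotropic, that is, if and only if the algebra is split at `p`.
-/

/-! ### Squares and discriminants in `ℤ_p` -/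

/-- `D` has the shape `b² - 4k` of the discriminant of a quadratic polynomial `X² + bX + k`. -/
def IsDiscriminant {R : Type*} [CommRing R] (D : R) : Prop :=
  ∃ b k : R, D = b ^ 2 - 4 * k

theorem IsDiscriminant.mul {R : Type*} [CommRing R] {D E : R} (hD : IsDiscriminant D)
    (hE : IsDiscriminant E) : IsDiscriminant (D * E) := by
  obtain ⟨b, k, rfl⟩ := hD
  obtain ⟨c, l, rfl⟩ := hE
  exact ⟨b * c, k * c ^ 2 + l * b ^ 2 - 4 * k * l, by ring⟩

theorem isDiscriminant_sq {R : Type*} [CommRing R] (s : R) : IsDiscriminant (s ^ 2) :=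
  ⟨s, 0, by ring⟩

theorem IsDiscriminant.of_mul_left {R : Type*} [CommRing R] {D E : R} (hD : IsDiscriminant D)
    (hu : IsUnit D) (h : IsDiscriminant (D * E)) : IsDiscriminant E := by
  obtain ⟨g, hg⟩ := hu.exists_right_inv
  rw [show E = D * E * D * g ^ 2 by linear_combination (-E * D * g - E) * hg]
  exact (h.mul hD).mul (isDiscriminant_sq g)

/-- `D` is a discriminant at which the prime element `π` cannot be removed: it is not `π²` times
another discriminant.  For `π = p` in `ℤ_p` this is the local condition for `D` to be
the discriminant of a maximal order. -/
def IsFundamentalAt {R : Type*} [CommRing R] (π D : R) : Prop :=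
  IsDiscriminant D ∧ ∀ E, IsDiscriminant E → D ≠ π ^ 2 * E

theorem exists_eq_zmod_two_of_discr_ne_zero : ∀ α β γ e : ZMod 2, β ^ 2 - 4 * α * γ ≠ 0 → e ≠ 0 →
    ∃ x y : ZMod 2, α * x ^ 2 + β * x * y + γ * y ^ 2 = e := by
  decide

section Padic

variable {p : ℕ} [Fact p.Prime]

theorem isUnit_padicInt_iff_not_dvd {x : ℤ_[p]} : IsUnit x ↔ ¬ (p : ℤ_[p]) ∣ x := by
  rw [← PadicInt.norm_lt_one_iff_dvd, ← PadicInt.not_isUnit_iff, not_not]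

theorem not_isUnit_padicInt_iff_dvd {x : ℤ_[p]} : ¬ IsUnit x ↔ (p : ℤ_[p]) ∣ x := by
  rw [isUnit_padicInt_iff_not_dvd, not_not]

theorem dvd_intCast_padicInt_iff {k : ℤ} : (p : ℤ_[p]) ∣ k ↔ (p : ℤ) ∣ k := by
  simpa using PadicInt.pow_p_dvd_int_iff (p := p) 1 k

theorem toZMod_eq_zero_iff_dvd {x : ℤ_[p]} : PadicInt.toZMod x = 0 ↔ (p : ℤ_[p]) ∣ x := by
  rw [← RingHom.mem_ker, PadicInt.ker_toZMod, PadicInt.maximalIdeal_eq_span_p,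
    Ideal.mem_span_singleton]

theorem toZMod_ne_zero_of_isUnit {x : ℤ_[p]} (hx : IsUnit x) : PadicInt.toZMod x ≠ 0 :=
  (hx.map PadicInt.toZMod).ne_zero

theorem isUnit_two_padicInt (h2 : p ≠ 2) : IsUnit (2 : ℤ_[p]) := by
  rw [isUnit_padicInt_iff_not_dvd]
  intro h
  have h' : (p : ℤ) ∣ (2 : ℕ) := dvd_intCast_padicInt_iff.mp (by exact_mod_cast h)
  exact h2 ((Nat.prime_dvd_prime_iff_eq Fact.out Nat.prime_two).mp (by exact_mod_cast h'))

theorem isUnit_four_padicInt (h2 : p ≠ 2) : IsUnit (4 : ℤ_[p]) := by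
  simpa [show (2 : ℤ_[p]) * 2 = 4 by norm_num] using
    (isUnit_two_padicInt h2).mul (isUnit_two_padicInt h2)

open Polynomial in
theorem exists_quadratic_root_of_dvd {A B C t : ℤ_[p]}
    (h : (p : ℤ_[p]) ∣ A * t ^ 2 + B * t + C) (hu : IsUnit (2 * A * t + B)) :
    ∃ s : ℤ_[p], A * s ^ 2 + B * s + C = 0 := by
  set f : ℤ_[p][X] := .C A * X ^ 2 + .C B * X + .C C
  have eval_f : ∀ s : ℤ_[p], aeval s f = A * s ^ 2 + B * s + C := fun s => by simp [f]
  have eval_deriv : aeval t (derivative f) = 2 * A * t + B := by simp [f]; ring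
  have small : ‖aeval t f‖ < ‖aeval t (derivative f)‖ ^ 2 := by
    rw [eval_f, eval_deriv, PadicInt.isUnit_iff.mp hu, one_pow]
    exact (PadicInt.norm_lt_one_iff_dvd _).mpr h
  obtain ⟨s, hs, -⟩ := hensels_lemma small
  exact ⟨s, by rw [← eval_f, hs]⟩

theorem isSquare_one_add_four_mul (z : ℤ_[p]) : IsSquare (1 + 4 * (p * z)) := by
  obtain ⟨s, hs⟩ : ∃ s : ℤ_[p], 1 * s ^ 2 + 1 * s + -(p * z) = 0 :=
    exists_quadratic_root_of_dvd (t := 0) ⟨-z, by ring⟩ (by simp)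
  exact ⟨1 + 2 * s, by linear_combination -4 * hs⟩

theorem isSquare_of_dvd_sub_sq {e s : ℤ_[p]} (he : IsUnit e) (h : 4 * (p : ℤ_[p]) ∣ e - s ^ 2) :
    IsSquare e := by
  obtain ⟨k, hk⟩ := h
  have hs : IsUnit s := by
    by_contra hs
    rw [not_isUnit_padicInt_iff_dvd] at hs
    refine isUnit_padicInt_iff_not_dvd.mp he ?_
    rw [show e = s * s + p * (4 * k) by linear_combination hk]
    exact dvd_add (hs.mul_right _) (dvd_mul_right _ _)
  obtain ⟨g, hg⟩ := hs.exists_right_inv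
  rw [show e = s ^ 2 * (1 + 4 * (p * (k * g ^ 2))) by
    linear_combination hk - 4 * p * k * (s * g + 1) * hg]
  exact (IsSquare.sq s).mul (isSquare_one_add_four_mul _)

theorem isSquare_of_isSquare_mul_sq {e s : ℤ_[p]} (hs : IsUnit s) (h : IsSquare (e * s ^ 2)) :
    IsSquare e := by
  obtain ⟨g, hg⟩ := hs.exists_right_inv
  rw [show e = e * s ^ 2 * g ^ 2 by linear_combination (-e * s * g - e) * hg]
  exact h.mul (IsSquare.sq g)

theorem isSquare_toZMod_iff (h2 : p ≠ 2) {e : ℤ_[p]} (he : IsUnit e) :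
    IsSquare (PadicInt.toZMod e) ↔ IsSquare e := by
  refine ⟨?_, fun h => h.map _⟩
  rintro ⟨r, hr⟩
  refine isSquare_of_dvd_sub_sq (s := (r.val : ℤ_[p])) he ?_
  rw [(isUnit_four_padicInt h2).mul_left_dvd, ← toZMod_eq_zero_iff_dvd]
  simp [hr, sq]

theorem isUnit_of_isUnit_sq_sub_four_mul_two {b k : ℤ_[2]} (h : IsUnit (b ^ 2 - 4 * k)) :
    IsUnit b := by
  by_contra hb
  obtain ⟨c, rfl⟩ := not_isUnit_padicInt_iff_dvd.mp hb
  exact isUnit_padicInt_iff_not_dvd.mp h ⟨2 * c ^ 2 - 2 * k, by push_cast; ring⟩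

theorem two_dvd_add_of_isUnit {x y : ℤ_[2]} (hx : IsUnit x) (hy : IsUnit y) : 2 ∣ x + y := by
  have one_of_ne_zero : ∀ r : ZMod 2, r ≠ 0 → r = 1 := by decide
  have h : PadicInt.toZMod (x + y) = 0 := by
    rw [map_add, one_of_ne_zero _ (toZMod_ne_zero_of_isUnit hx),
      one_of_ne_zero _ (toZMod_ne_zero_of_isUnit hy)]
    decide
  exact_mod_cast toZMod_eq_zero_iff_dvd.mp h

theorem isSquare_mul_of_not_isSquare {D E : ℤ_[p]} (hD : IsUnit D) (hE : IsUnit E)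
    (dD : IsDiscriminant D) (dE : IsDiscriminant E) (nD : ¬ IsSquare D) (nE : ¬ IsSquare E) :
    IsSquare (D * E) := by
  rcases eq_or_ne p 2 with rfl | h2
  · obtain ⟨b, k, rfl⟩ := dD
    obtain ⟨c, l, rfl⟩ := dE
    have isUnit_of_nonsquare : ∀ {b k : ℤ_[2]}, IsUnit (b ^ 2 - 4 * k) →
        ¬ IsSquare (b ^ 2 - 4 * k) → IsUnit k := by
      intro b k hu hn
      by_contra hk
      obtain ⟨j, rfl⟩ := not_isUnit_padicInt_iff_dvd.mp hk
      exact hn (isSquare_of_dvd_sub_sq (s := b) hu ⟨-j, by ring⟩)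
    obtain ⟨j, hj⟩ := two_dvd_add_of_isUnit
      ((isUnit_of_nonsquare hD nD).mul ((isUnit_of_isUnit_sq_sub_four_mul_two hE).pow 2))
      ((isUnit_of_nonsquare hE nE).mul ((isUnit_of_isUnit_sq_sub_four_mul_two hD).pow 2))
    exact isSquare_of_dvd_sub_sq (s := b * c) (hD.mul hE)
      ⟨2 * k * l - j, by push_cast; linear_combination -4 * hj⟩
  · have char_eq : ∀ {e : ℤ_[p]}, IsUnit e → ¬ IsSquare e →
        quadraticChar (ZMod p) (PadicInt.toZMod e) = -1 := by
      intro e he hn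
      rw [quadraticChar_neg_one_iff_not_isSquare, isSquare_toZMod_iff h2 he]
      exact hn
    rw [← isSquare_toZMod_iff h2 (hD.mul hE),
      ← quadraticChar_one_iff_isSquare (toZMod_ne_zero_of_isUnit (hD.mul hE)),
      map_mul, map_mul, char_eq hD nD, char_eq hE nE]
    norm_num

theorem isDiscriminant_of_ne_two (h2 : p ≠ 2) (D : ℤ_[p]) : IsDiscriminant D := by
  obtain ⟨g, hg⟩ := (isUnit_four_padicInt h2).exists_right_inv
  exact ⟨0, -(g * D), by linear_combination -D * hg⟩

theorem exists_eq_sq_add_two_mul_isUnit {E m : ℤ_[2]} (hE : IsUnit E) (dE : IsDiscriminant E)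
    (hm : ¬ IsDiscriminant m) : ∃ s e, IsUnit e ∧ E * m = s ^ 2 + 2 * e := by
  have not_disc : ¬ IsDiscriminant (E * m) := fun h => hm (dE.of_mul_left hE h)
  have isUnit_of_eq : ∀ {s e}, E * m = s ^ 2 + 2 * e → IsUnit e := by
    intro s e h
    by_contra he
    obtain ⟨k, rfl⟩ := not_isUnit_padicInt_iff_dvd.mp he
    exact not_disc ⟨s, -k, by push_cast at h; linear_combination h⟩
  by_cases hu : IsUnit (E * m)
  · obtain ⟨e, he⟩ := two_dvd_add_of_isUnit hu isUnit_one.neg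
    have h : E * m = 1 ^ 2 + 2 * e := by linear_combination he
    exact ⟨1, e, isUnit_of_eq h, h⟩
  · obtain ⟨e, he⟩ := not_isUnit_padicInt_iff_dvd.mp hu
    have h : E * m = 0 ^ 2 + 2 * e := by push_cast at he; linear_combination he
    exact ⟨0, e, isUnit_of_eq h, h⟩

theorem four_dvd_sq_sub_sq {x y : ℤ_[p]} (h : 4 ∣ p * (x ^ 2 - y ^ 2)) : 4 ∣ x ^ 2 - y ^ 2 := by
  rcases eq_or_ne p 2 with rfl | h2
  · obtain ⟨k, hk⟩ := h
    have two_prime : Prime (2 : ℤ_[2]) := by exact_mod_cast PadicInt.prime_p (p := 2)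
    have h2 : (2 : ℤ_[2]) ∣ (x - y) * (x - y + 2 * y) :=
      ⟨k, mul_left_cancel₀ two_prime.ne_zero (by push_cast at hk; linear_combination hk)⟩
    have hxy : (2 : ℤ_[2]) ∣ x - y := by
      rcases two_prime.dvd_or_dvd h2 with h | h
      · exact h
      · exact (dvd_add_left (dvd_mul_right _ _)).mp h
    obtain ⟨j, hj⟩ := hxy
    exact ⟨j * (j + y), by linear_combination (x + y + 2 * j) * hj⟩
  · exact (isUnit_four_padicInt h2).dvd

theorem isSquare_mul_iff {D E : ℤ_[p]} (hD : IsUnit D) (hE : IsUnit E) (dD : IsDiscriminant D)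
    (dE : IsDiscriminant E) : IsSquare (D * E) ↔ (IsSquare D ↔ IsSquare E) := by
  by_cases sD : IsSquare D
  · obtain ⟨s, rfl⟩ := sD
    have hs : IsUnit s := isUnit_of_mul_isUnit_left hD
    refine ⟨fun h => iff_of_true ⟨s, rfl⟩ (isSquare_of_isSquare_mul_sq hs ?_),
      fun h => .mul ⟨s, rfl⟩ (h.mp ⟨s, rfl⟩)⟩
    rwa [sq, mul_comm]
  by_cases sE : IsSquare E
  · obtain ⟨s, rfl⟩ := sE
    refine iff_of_false (fun h => sD (isSquare_of_isSquare_mul_sq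
      (isUnit_of_mul_isUnit_left hE) ?_)) (fun h => sD (h.mpr ⟨s, rfl⟩))
    rwa [sq]
  · exact iff_of_true (isSquare_mul_of_not_isSquare hD hE dD dE sD sE) (iff_of_false sD sE)

theorem eq_zero_of_descent {ι : Type*} {P : (ι → ℤ_[p]) → Prop}
    (h : ∀ x, P x → ∃ y, x = (p : ℤ_[p]) • y ∧ P y) {x : ι → ℤ_[p]} (hx : P x) : x = 0 := by
  have pow_dvd : ∀ n : ℕ, ∀ x, P x → ∀ i, (p : ℤ_[p]) ^ n ∣ x i := by
    intro n
    induction n with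
    | zero => simp
    | succ n ih =>
      intro x hx i
      obtain ⟨y, rfl, hy⟩ := h x hx
      rw [pow_succ']
      exact mul_dvd_mul_left _ (ih y hy i)
  ext1 i
  by_contra hi
  obtain ⟨n, hn⟩ := FiniteMultiplicity.of_prime_left PadicInt.prime_p hi
  exact hn (pow_dvd (n + 1) x hx i)

theorem exists_eq_zmod_of_discr_ne_zero {α β γ e : ZMod p} (h : β ^ 2 - 4 * α * γ ≠ 0)
    (he : e ≠ 0) : ∃ x y : ZMod p, α * x ^ 2 + β * x * y + γ * y ^ 2 = e := by
  rcases (Fact.out : p.Prime).eq_two_or_odd with rfl | hodd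
  · exact exists_eq_zmod_two_of_discr_ne_zero α β γ e h he
  rcases eq_or_ne α 0 with rfl | hα
  · have hβ : β ≠ 0 := by
      rintro rfl
      simp at h
    exact ⟨(e - γ) / β, 1, by field_simp; ring⟩
  have h2 : (2 : ZMod p) ≠ 0 := Ring.two_ne_zero (by
    rw [ZMod.ringChar_zmod_n]
    rintro rfl
    simp at hodd)
  open Polynomial in
  obtain ⟨s, y, hsy⟩ := FiniteField.exists_root_sum_quadratic
    (f := C 1 * X ^ 2 + C 0 * X + C (-(4 * α * e)))
    (g := C (-(β ^ 2 - 4 * α * γ)) * X ^ 2 + C 0 * X + C 0)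
    (degree_quadratic one_ne_zero) (degree_quadratic (neg_ne_zero.mpr h))
    (by rwa [ZMod.card])
  replace hsy : s ^ 2 - (β ^ 2 - 4 * α * γ) * y ^ 2 = 4 * α * e := by
    simp only [eval_add, eval_mul, eval_C, eval_pow, eval_X] at hsy
    linear_combination hsy
  refine ⟨(s - β * y) / (2 * α), y, ?_⟩
  field_simp
  linear_combination hsy

theorem exists_eq_of_isUnit_discr {α β γ e : ℤ_[p]} (h : IsUnit (β ^ 2 - 4 * α * γ))
    (he : IsUnit e) : ∃ x y : ℤ_[p], α * x ^ 2 + β * x * y + γ * y ^ 2 = e := by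
  obtain ⟨x', y', hxy⟩ := exists_eq_zmod_of_discr_ne_zero (α := PadicInt.toZMod α)
    (β := PadicInt.toZMod β) (γ := PadicInt.toZMod γ)
    (by simpa [map_ofNat] using toZMod_ne_zero_of_isUnit h) (toZMod_ne_zero_of_isUnit he)
  obtain ⟨x, rfl⟩ : ∃ x : ℤ_[p], PadicInt.toZMod x = x' := ⟨x'.val, by simp⟩
  obtain ⟨y, rfl⟩ : ∃ y : ℤ_[p], PadicInt.toZMod y = y' := ⟨y'.val, by simp⟩
  have hd : (p : ℤ_[p]) ∣ α * x ^ 2 + β * x * y + γ * y ^ 2 - e := by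
    rw [← toZMod_eq_zero_iff_dvd]
    simp [hxy]
  by_cases hx : IsUnit (2 * α * x + β * y)
  · obtain ⟨s, hs⟩ := exists_quadratic_root_of_dvd (C := γ * y ^ 2 - e)
      (by convert hd using 1; ring) hx
    exact ⟨s, y, by linear_combination hs⟩
  by_cases hy : IsUnit (2 * γ * y + β * x)
  · obtain ⟨s, hs⟩ := exists_quadratic_root_of_dvd (C := α * x ^ 2 - e)
      (by convert hd using 1; ring) hy
    exact ⟨x, s, by linear_combination hs⟩
  -- Both partial derivatives vanish mod `p`, which a unit discriminant allows only at the origin.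
  exfalso
  obtain ⟨k, hk⟩ := not_isUnit_padicInt_iff_dvd.mp hx
  obtain ⟨l, hl⟩ := not_isUnit_padicInt_iff_dvd.mp hy
  obtain ⟨x₁, rfl⟩ : (p : ℤ_[p]) ∣ x :=
    h.dvd_mul_left.mp ⟨β * l - 2 * γ * k, by linear_combination β * hl - 2 * γ * hk⟩
  obtain ⟨y₁, rfl⟩ : (p : ℤ_[p]) ∣ y :=
    h.dvd_mul_left.mp ⟨β * k - 2 * α * l, by linear_combination β * hk - 2 * α * hl⟩
  obtain ⟨m, hm⟩ := hd
  exact isUnit_padicInt_iff_not_dvd.mp he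
    ⟨p * (α * x₁ ^ 2 + β * x₁ * y₁ + γ * y₁ ^ 2) - m, by linear_combination -hm⟩

end Padic

/-! ### Ternary quadratic forms and their adjoints -/

/-- The ternary quadratic form `a x² + b y² + c z² + u yz + v xz + w xy`. -/
structure TernaryForm (R : Type*) where
  (a b c u v w : R)

namespace TernaryForm

variable {R : Type*} [CommRing R]

/-- The Gram matrix of the polar form of `Q`. -/
def matrix (Q : TernaryForm R) : Matrix (Fin 3) (Fin 3) R :=
  !![2 * Q.a, Q.w, Q.v; Q.w, 2 * Q.b, Q.u; Q.v, Q.u, 2 * Q.c]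

/-- The half-discriminant of `Q`, which makes sense also when `2` is not invertible. -/
def halfDisc (Q : TernaryForm R) : R :=
  4 * Q.a * Q.b * Q.c + Q.u * Q.v * Q.w - Q.a * Q.u ^ 2 - Q.b * Q.v ^ 2 - Q.c * Q.w ^ 2

/-- The adjoint form of `Q`, whose matrix is the adjugate of `Q.matrix`. -/
def adjoint (Q : TernaryForm R) (x : Fin 3 → R) : R :=
  (4 * Q.b * Q.c - Q.u ^ 2) * x 0 ^ 2 + (4 * Q.a * Q.c - Q.v ^ 2) * x 1 ^ 2
    + (4 * Q.a * Q.b - Q.w ^ 2) * x 2 ^ 2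
    + 2 * (Q.v * Q.w - 2 * Q.a * Q.u) * x 1 * x 2 + 2 * (Q.u * Q.w - 2 * Q.b * Q.v) * x 0 * x 2
    + 2 * (Q.u * Q.v - 2 * Q.c * Q.w) * x 0 * x 1

/-- The value of the adjoint form at the third basis vector; its negative is the discriminant of
the binary form `Q(x, y, 0)`. -/
def minor (Q : TernaryForm R) : R :=
  4 * Q.a * Q.b - Q.w ^ 2

/-- The coefficient of `xy` in half of the adjoint form. -/
def offDiag (Q : TernaryForm R) : R :=
  Q.u * Q.v - 2 * Q.c * Q.w

/-- The binary form left over when the square is completed in `Q.minor * Q.adjoint`. -/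
def binary (Q : TernaryForm R) (x y : R) : R :=
  Q.b * x ^ 2 + (-Q.w) * x * y + Q.a * y ^ 2

/-- The linear form whose square is completed in `Q.minor * Q.adjoint`. -/
def linear (Q : TernaryForm R) (x : Fin 3 → R) : R :=
  Q.minor * x 2 + (Q.u * Q.w - 2 * Q.b * Q.v) * x 0 + (Q.v * Q.w - 2 * Q.a * Q.u) * x 1

/-- The form `Q` after a cyclic permutation of the three variables. -/
def rotate (Q : TernaryForm R) : TernaryForm R :=
  ⟨Q.b, Q.c, Q.a, Q.v, Q.w, Q.u⟩

/-- The quaternary form `⟨1⟩ ⊥ Q.adjoint` is anisotropic. -/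
def OneAddAdjointAnisotropic (Q : TernaryForm R) : Prop :=
  ∀ (t : R) (x : Fin 3 → R), t ^ 2 + Q.adjoint x = 0 → t = 0 ∧ x = 0

variable (Q : TernaryForm R)

theorem det_matrix : Q.matrix.det = 2 * Q.halfDisc := by
  simp only [matrix, halfDisc, Matrix.det_fin_three, Matrix.of_apply, Matrix.cons_val]
  ring

theorem dotProduct_adjugate_mulVec (x : Fin 3 → R) :
    x ⬝ᵥ Q.matrix.adjugate *ᵥ x = Q.adjoint x := by
  simp only [matrix, adjoint, Matrix.adjugate_fin_three_of, Matrix.mulVec, dotProduct,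
    Fin.sum_univ_three, Matrix.of_apply, Matrix.cons_val]
  ring

theorem minor_mul_adjoint (x : Fin 3 → R) :
    Q.minor * Q.adjoint x = Q.linear x ^ 2 + 4 * Q.halfDisc * Q.binary (x 0) (x 1) := by
  simp only [minor, adjoint, linear, halfDisc, binary]
  ring

theorem isDiscriminant_neg_adjoint (x : Fin 3 → R) : IsDiscriminant (-Q.adjoint x) :=
  ⟨Q.u * x 0 + Q.v * x 1 + Q.w * x 2,
    Q.b * Q.c * x 0 ^ 2 + Q.a * Q.c * x 1 ^ 2 + Q.a * Q.b * x 2 ^ 2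
      + (Q.v * Q.w - Q.a * Q.u) * x 1 * x 2 + (Q.u * Q.w - Q.b * Q.v) * x 0 * x 2
      + (Q.u * Q.v - Q.c * Q.w) * x 0 * x 1,
    by simp only [adjoint]; ring⟩

theorem isDiscriminant_neg_minor : IsDiscriminant (-Q.minor) :=
  ⟨Q.w, Q.a * Q.b, by simp only [minor]; ring⟩

theorem adjoint_smul (r : R) (x : Fin 3 → R) : Q.adjoint (r • x) = r ^ 2 * Q.adjoint x := by
  simp only [adjoint, Pi.smul_apply, smul_eq_mul]
  ring

theorem adjoint_rotate (x : Fin 3 → R) : Q.rotate.adjoint x = Q.adjoint ![x 2, x 0, x 1] := by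
  simp only [adjoint, rotate, Matrix.cons_val]
  ring

theorem range_adjoint_rotate : Set.range Q.rotate.adjoint = Set.range Q.adjoint := by
  ext d
  constructor
  · rintro ⟨x, rfl⟩
    exact ⟨_, (Q.adjoint_rotate x).symm⟩
  · rintro ⟨x, rfl⟩
    refine ⟨![x 1, x 2, x 0], ?_⟩
    rw [adjoint_rotate]
    congr 1
    ext i
    fin_cases i <;> rfl

theorem halfDisc_rotate : Q.rotate.halfDisc = Q.halfDisc := by
  simp only [halfDisc, rotate]
  ring

theorem OneAddAdjointAnisotropic.rotate {Q : TernaryForm R} (h : Q.OneAddAdjointAnisotropic) :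
    Q.rotate.OneAddAdjointAnisotropic := by
  intro t x hx
  rw [adjoint_rotate] at hx
  obtain ⟨ht, hx⟩ := h t _ hx
  refine ⟨ht, ?_⟩
  ext i
  fin_cases i
  exacts [congrFun hx 1, congrFun hx 2, congrFun hx 0]

theorem oneAddAdjointAnisotropic_rotate :
    Q.rotate.OneAddAdjointAnisotropic ↔ Q.OneAddAdjointAnisotropic :=
  ⟨fun h => h.rotate.rotate, .rotate⟩

theorem range_adjoint_rotate_iterate (k : ℕ) :
    Set.range (rotate^[k] Q).adjoint = Set.range Q.adjoint :=
  congrFun (Function.iterate_invariant (f := rotate) (g := fun Q : TernaryForm R =>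
    Set.range Q.adjoint) (funext range_adjoint_rotate) k) Q

theorem halfDisc_rotate_iterate (k : ℕ) : (rotate^[k] Q).halfDisc = Q.halfDisc :=
  congrFun (Function.iterate_invariant (f := rotate) (g := halfDisc) (funext halfDisc_rotate) k) Q

theorem oneAddAdjointAnisotropic_rotate_iterate (k : ℕ) :
    (rotate^[k] Q).OneAddAdjointAnisotropic ↔ Q.OneAddAdjointAnisotropic :=
  (congrFun (Function.iterate_invariant (f := rotate) (g := OneAddAdjointAnisotropic)
    (funext fun Q => propext Q.oneAddAdjointAnisotropic_rotate) k) Q).to_iff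

theorem rotate_minor_mul_rotate_rotate_minor :
    Q.rotate.minor * Q.rotate.rotate.minor = Q.offDiag ^ 2 + 4 * Q.c * Q.halfDisc := by
  simp only [minor, rotate, offDiag, halfDisc]
  ring

-- The determinant of the adjugate of `Q.matrix` is the square of its determinant.
theorem four_mul_halfDisc_sq :
    4 * Q.halfDisc ^ 2 =
      Q.minor * Q.rotate.minor * Q.rotate.rotate.minor
        + 2 * Q.offDiag * Q.rotate.offDiag * Q.rotate.rotate.offDiag
        - Q.minor * Q.offDiag ^ 2 - Q.rotate.minor * Q.rotate.offDiag ^ 2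
        - Q.rotate.rotate.minor * Q.rotate.rotate.offDiag ^ 2 := by
  simp only [minor, rotate, offDiag, halfDisc]
  ring

/-! ### Adjoint forms over `ℤ_p` -/

section Padic

variable {p : ℕ} [Fact p.Prime] {Q : TernaryForm ℤ_[p]} {d : ℤ_[p]}

theorem four_dvd_halfDisc_of_dvd_minor {Q : TernaryForm ℤ_[2]}
    (h : ∀ k, 2 ∣ (rotate^[k] Q).minor) : 4 ∣ Q.halfDisc := by
  have two_dvd_w : ∀ {Q : TernaryForm ℤ_[2]}, 2 ∣ Q.minor → 2 ∣ Q.w := by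
    rintro Q ⟨m, hm⟩
    have h2 : Prime (2 : ℤ_[2]) := by exact_mod_cast PadicInt.prime_p (p := 2)
    exact h2.dvd_of_dvd_pow (n := 2) ⟨2 * Q.a * Q.b - m, by
      rw [minor] at hm
      linear_combination -hm⟩
  obtain ⟨w, hw⟩ := two_dvd_w (h 0)
  obtain ⟨u, hu⟩ : 2 ∣ Q.u := two_dvd_w (h 1)
  obtain ⟨v, hv⟩ : 2 ∣ Q.v := two_dvd_w (h 2)
  refine ⟨Q.a * Q.b * Q.c + 2 * u * v * w - Q.a * u ^ 2 - Q.b * v ^ 2 - Q.c * w ^ 2, ?_⟩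
  rw [Function.iterate_zero, id] at hw
  rw [halfDisc, hu, hv, hw]
  ring

theorem exists_isUnit_minor_of_dvd (h : (p : ℤ_[p]) ∣ Q.halfDisc)
    (hsq : ¬ (p : ℤ_[p]) ^ 2 ∣ Q.halfDisc) : ∃ k, IsUnit (rotate^[k] Q).minor := by
  by_contra! hn
  simp only [not_isUnit_padicInt_iff_dvd] at hn
  rcases eq_or_ne p 2 with rfl | h2
  · refine hsq ?_
    convert four_dvd_halfDisc_of_dvd_minor (by exact_mod_cast hn) using 1
    norm_num
  have dvd_offDiag : ∀ Q : TernaryForm ℤ_[p], (p : ℤ_[p]) ∣ Q.halfDisc →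
      (p : ℤ_[p]) ∣ Q.rotate.minor → (p : ℤ_[p]) ∣ Q.offDiag := by
    intro Q hN hm
    refine PadicInt.prime_p.dvd_of_dvd_pow (n := 2) ?_
    rw [show Q.offDiag ^ 2 = Q.rotate.minor * Q.rotate.rotate.minor - 4 * Q.c * Q.halfDisc by
      linear_combination -Q.rotate_minor_mul_rotate_rotate_minor]
    exact dvd_sub (hm.mul_right _) (hN.mul_left _)
  obtain ⟨m₀, hm₀⟩ := hn 0
  obtain ⟨m₁, hm₁⟩ := hn 1
  obtain ⟨m₂, hm₂⟩ := hn 2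
  obtain ⟨o₀, ho₀⟩ := dvd_offDiag _ h (hn 1)
  obtain ⟨o₁, ho₁⟩ := dvd_offDiag Q.rotate (by rwa [halfDisc_rotate]) (hn 2)
  obtain ⟨o₂, ho₂⟩ := dvd_offDiag Q.rotate.rotate (by rwa [halfDisc_rotate, halfDisc_rotate]) (hn 0)
  obtain ⟨n, hN⟩ := h
  simp only [Function.iterate_succ_apply', Function.iterate_zero, id] at hm₀ hm₁ hm₂
  have hdet := Q.four_mul_halfDisc_sq
  rw [hm₀, hm₁, hm₂, ho₀, ho₁, ho₂, hN] at hdet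
  have p_ne : (p : ℤ_[p]) ≠ 0 := PadicInt.prime_p.ne_zero
  have p_dvd : (p : ℤ_[p]) ∣ n ^ 2 := (isUnit_four_padicInt h2).dvd_mul_left.mp
    ⟨m₀ * m₁ * m₂ + 2 * o₀ * o₁ * o₂ - m₀ * o₀ ^ 2 - m₁ * o₁ ^ 2 - m₂ * o₂ ^ 2,
      mul_left_cancel₀ (pow_ne_zero 2 p_ne) (by linear_combination hdet)⟩
  rw [hN, sq] at hsq
  exact hsq (mul_dvd_mul_left _ (PadicInt.prime_p.dvd_of_dvd_pow p_dvd))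

theorem ne_two_and_isUnit_offDiag_of_not_isUnit_minor (h : IsUnit Q.halfDisc)
    (hm : ∀ k, ¬ IsUnit (rotate^[k] Q).minor) : p ≠ 2 ∧ IsUnit Q.offDiag := by
  simp only [not_isUnit_padicInt_iff_dvd] at hm
  have h2 : p ≠ 2 := by
    rintro rfl
    obtain ⟨n, hn⟩ := four_dvd_halfDisc_of_dvd_minor (by exact_mod_cast hm)
    exact isUnit_padicInt_iff_not_dvd.mp h ⟨2 * n, by push_cast; linear_combination hn⟩
  refine ⟨h2, by_contra fun ho => ?_⟩
  rw [not_isUnit_padicInt_iff_dvd] at ho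
  refine isUnit_padicInt_iff_not_dvd.mp ((isUnit_four_padicInt h2).mul (h.pow 2)) ?_
  rw [four_mul_halfDisc_sq]
  exact dvd_sub (dvd_sub (dvd_sub (dvd_add (((hm 0).mul_right _).mul_right _)
    (((ho.mul_left _).mul_right _).mul_right _)) ((hm 0).mul_right _)) ((hm 1).mul_right _))
    ((hm 2).mul_right _)

theorem mem_range_adjoint_of_isUnit_offDiag (h2 : p ≠ 2) (hm : ¬ IsUnit Q.rotate.rotate.minor)
    (ho : IsUnit Q.offDiag) : d ∈ Set.range Q.adjoint := by
  have hu : IsUnit (2 * Q.offDiag) := (isUnit_two_padicInt h2).mul ho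
  obtain ⟨k, hk⟩ := not_isUnit_padicInt_iff_dvd.mp hm
  obtain ⟨g, hg⟩ := hu.exists_right_inv
  set e := d - Q.rotate.minor with he
  obtain ⟨s, hs⟩ := exists_quadratic_root_of_dvd (A := Q.rotate.rotate.minor) (B := 2 * Q.offDiag)
    (C := -e) (t := g * e) ⟨k * (g * e) ^ 2, by linear_combination (g * e) ^ 2 * hk + e * hg⟩ (by
      rw [isUnit_padicInt_iff_not_dvd] at hu ⊢
      rwa [hk, dvd_add_right ⟨2 * k * (g * e), by ring⟩])
  refine ⟨![1, s, 0], ?_⟩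
  simp only [minor, rotate, offDiag, adjoint, Matrix.cons_val] at hs he ⊢
  linear_combination hs + he

theorem mem_range_adjoint_of_isUnit_minor (hm : IsUnit Q.minor) {s x y : ℤ_[p]}
    (h : Q.minor * d = s ^ 2 + 4 * Q.halfDisc * Q.binary x y) : d ∈ Set.range Q.adjoint := by
  obtain ⟨g, hg⟩ := hm.exists_right_inv
  refine ⟨![x, y, g * (s - (Q.u * Q.w - 2 * Q.b * Q.v) * x - (Q.v * Q.w - 2 * Q.a * Q.u) * y)],
    hm.mul_left_cancel ?_⟩
  have linear_eq : Q.linear ![x, y, g * (s - (Q.u * Q.w - 2 * Q.b * Q.v) * x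
      - (Q.v * Q.w - 2 * Q.a * Q.u) * y)] = s := by
    simp only [linear, Matrix.cons_val]
    linear_combination (s - (Q.u * Q.w - 2 * Q.b * Q.v) * x - (Q.v * Q.w - 2 * Q.a * Q.u) * y) * hg
  rw [minor_mul_adjoint, linear_eq, h]
  simp only [Matrix.cons_val]

theorem mem_range_adjoint_of_isSquare (hm : IsUnit Q.minor) (h : IsSquare (Q.minor * d)) :
    d ∈ Set.range Q.adjoint := by
  obtain ⟨s, hs⟩ := h
  refine mem_range_adjoint_of_isUnit_minor hm (s := s) (x := 0) (y := 0) ?_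
  rw [hs, binary]
  ring

theorem exists_binary_eq_of_isUnit (hm : IsUnit Q.minor) {e : ℤ_[p]} (he : IsUnit e) :
    ∃ x y, Q.binary x y = e :=
  exists_eq_of_isUnit_discr (by
    convert hm.neg using 1
    rw [minor]
    ring) he

theorem mem_range_adjoint_of_isUnit_halfDisc_of_isUnit_minor (hN : IsUnit Q.halfDisc)
    (hm : IsUnit Q.minor) (hd : IsDiscriminant (-d)) : d ∈ Set.range Q.adjoint := by
  obtain ⟨b, k, hbk⟩ := Q.isDiscriminant_neg_minor.mul hd
  rw [neg_mul_neg] at hbk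
  obtain ⟨g, hg⟩ := hN.exists_right_inv
  have of_isUnit : ∀ j, IsUnit (j ^ 2 + j * b + k) → d ∈ Set.range Q.adjoint := by
    intro j hj
    obtain ⟨x, y, hxy⟩ :=
      exists_binary_eq_of_isUnit hm (hj.neg.mul (IsUnit.of_mul_eq_one_right _ hg))
    refine mem_range_adjoint_of_isUnit_minor hm (s := b + 2 * j) (x := x) (y := y) ?_
    rw [hxy]
    linear_combination hbk + 4 * (j ^ 2 + j * b + k) * hg
  by_cases hk : IsUnit k
  · exact of_isUnit 0 (by simpa using hk)
  rw [not_isUnit_padicInt_iff_dvd] at hk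
  by_cases hb : IsUnit b
  · refine mem_range_adjoint_of_isSquare hm (isSquare_of_dvd_sub_sq (s := b) ?_ ?_)
    · rw [isUnit_padicInt_iff_not_dvd] at hb ⊢
      rw [hbk, dvd_sub_left (hk.mul_left _)]
      exact fun h => hb (PadicInt.prime_p.dvd_of_dvd_pow h)
    · rw [hbk, show b ^ 2 - 4 * k - b ^ 2 = 4 * -k by ring]
      exact mul_dvd_mul_left _ (hk.neg_right)
  · refine of_isUnit 1 ?_
    rw [not_isUnit_padicInt_iff_dvd] at hb
    rw [isUnit_padicInt_iff_not_dvd, dvd_add_left hk, one_pow, one_mul, dvd_add_left hb,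
      ← isUnit_padicInt_iff_not_dvd]
    exact isUnit_one

theorem mem_range_adjoint_of_isUnit_halfDisc (hN : IsUnit Q.halfDisc)
    (hd : IsDiscriminant (-d)) : d ∈ Set.range Q.adjoint := by
  by_cases hm : ∃ k, IsUnit (rotate^[k] Q).minor
  · obtain ⟨k, hm⟩ := hm
    rw [← Q.range_adjoint_rotate_iterate k]
    rw [← Q.halfDisc_rotate_iterate k] at hN
    exact mem_range_adjoint_of_isUnit_halfDisc_of_isUnit_minor hN hm hd
  · push Not at hm
    obtain ⟨h2, ho⟩ := ne_two_and_isUnit_offDiag_of_not_isUnit_minor hN hm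
    exact mem_range_adjoint_of_isUnit_offDiag h2 (hm 2) ho

theorem mem_range_adjoint_iff_isSquare_minor_mul (hN : (p : ℤ_[p]) ∣ Q.halfDisc)
    (hm : IsUnit Q.minor) (hd : IsUnit d) :
    d ∈ Set.range Q.adjoint ↔ IsSquare (Q.minor * d) := by
  refine ⟨?_, mem_range_adjoint_of_isSquare hm⟩
  rintro ⟨x, rfl⟩
  refine isSquare_of_dvd_sub_sq (s := Q.linear x) (hm.mul hd) ?_
  rw [minor_mul_adjoint, add_sub_cancel_left, mul_assoc]
  exact mul_dvd_mul_left _ (hN.mul_right _)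

theorem mem_range_adjoint_of_minor_mul_eq {n s e : ℤ_[p]} (hn : IsUnit n)
    (hN : Q.halfDisc = p * n) (hm : IsUnit Q.minor) (he : IsUnit e)
    (h : Q.minor * d = s ^ 2 + 4 * p * e) : d ∈ Set.range Q.adjoint := by
  obtain ⟨g, hg⟩ := hn.exists_right_inv
  obtain ⟨x, y, hxy⟩ := exists_binary_eq_of_isUnit hm (he.mul (IsUnit.of_mul_eq_one_right _ hg))
  refine mem_range_adjoint_of_isUnit_minor hm (s := s) (x := x) (y := y) ?_
  rw [hxy, hN]
  linear_combination h - 4 * p * e * hg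

theorem mem_range_adjoint_of_dvd {n : ℤ_[p]} (hn : IsUnit n) (hN : Q.halfDisc = p * n)
    (hm : IsUnit Q.minor) (hpd : (p : ℤ_[p]) ∣ d) (hd : IsFundamentalAt (p : ℤ_[p]) (-d)) :
    d ∈ Set.range Q.adjoint := by
  rcases eq_or_ne p 2 with rfl | h2
  · obtain ⟨b, k, hbk⟩ := hd.1
    obtain ⟨c, rfl⟩ : (2 : ℤ_[2]) ∣ b := by
      obtain ⟨m, rfl⟩ := hpd
      have h : ((2 : ℕ) : ℤ_[2]) ∣ b ^ 2 :=
        ⟨2 * k - m, by push_cast at hbk ⊢; linear_combination -hbk⟩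
      exact_mod_cast PadicInt.prime_p.dvd_of_dvd_pow h
    have not_disc : ¬ IsDiscriminant (c ^ 2 - k) := fun h =>
      hd.2 _ h (by push_cast; linear_combination hbk)
    obtain ⟨s, e, he, hse⟩ :=
      exists_eq_sq_add_two_mul_isUnit hm.neg Q.isDiscriminant_neg_minor not_disc
    refine mem_range_adjoint_of_minor_mul_eq hn hN hm (s := 2 * s) he ?_
    push_cast
    linear_combination -Q.minor * hbk + 4 * hse
  · obtain ⟨m, rfl⟩ := hpd
    have hmu : IsUnit m := by
      by_contra hmu
      obtain ⟨k, rfl⟩ := not_isUnit_padicInt_iff_dvd.mp hmu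
      exact hd.2 _ (isDiscriminant_of_ne_two h2 (-k)) (by ring)
    obtain ⟨g, hg⟩ := (isUnit_four_padicInt h2).exists_right_inv
    refine mem_range_adjoint_of_minor_mul_eq hn hN hm (s := 0)
      ((hm.mul hmu).mul (IsUnit.of_mul_eq_one_right _ hg)) ?_
    linear_combination -p * Q.minor * m * hg

theorem dvd_and_dvd_of_dvd_binary (hm : IsUnit Q.minor) (hns : ¬ IsSquare (-Q.minor))
    {x y : ℤ_[p]} (h : (p : ℤ_[p]) ∣ Q.binary x y) : (p : ℤ_[p]) ∣ x ∧ (p : ℤ_[p]) ∣ y := by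
  have dvd_of_four_mul : ∀ {s z c : ℤ_[p]}, 4 * (c * Q.binary x y) = s ^ 2 + Q.minor * z ^ 2 →
      (p : ℤ_[p]) ∣ z := by
    intro s z c hz
    by_contra hzu
    rw [← isUnit_padicInt_iff_not_dvd] at hzu
    refine hns (isSquare_of_isSquare_mul_sq hzu
      (isSquare_of_dvd_sub_sq (s := s) (hm.neg.mul (hzu.pow 2)) ?_))
    rw [show -Q.minor * z ^ 2 - s ^ 2 = 4 * -(c * Q.binary x y) by linear_combination hz]
    exact mul_dvd_mul_left _ (h.mul_left _).neg_right
  constructor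
  · exact dvd_of_four_mul (s := 2 * Q.a * y - Q.w * x) (c := Q.a) (by
      rw [binary, minor]
      ring)
  · exact dvd_of_four_mul (s := 2 * Q.b * x - Q.w * y) (c := Q.b) (by
      rw [binary, minor]
      ring)

theorem dvd_and_dvd_of_add_eq_zero (hN : (p : ℤ_[p]) ∣ Q.halfDisc) (hm : IsUnit Q.minor)
    (hns : ¬ IsSquare (-Q.minor)) {t s x y : ℤ_[p]}
    (h : Q.minor * t ^ 2 + s ^ 2 + 4 * Q.halfDisc * Q.binary x y = 0) :
    (p : ℤ_[p]) ∣ t ∧ (p : ℤ_[p]) ∣ s := by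
  obtain ⟨n, hn⟩ := hN
  rw [hn] at h
  have ht : (p : ℤ_[p]) ∣ t := by
    by_contra htu
    rw [← isUnit_padicInt_iff_not_dvd] at htu
    exact hns (isSquare_of_isSquare_mul_sq htu
      (isSquare_of_dvd_sub_sq (s := s) (hm.neg.mul (htu.pow 2))
        ⟨n * Q.binary x y, by linear_combination -h⟩))
  refine ⟨ht, PadicInt.prime_p.dvd_of_dvd_pow (n := 2) ?_⟩
  obtain ⟨r, rfl⟩ := ht
  exact ⟨-(Q.minor * p * r ^ 2 + 4 * n * Q.binary x y), by linear_combination h⟩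

theorem dvd_binary_of_add_eq_zero {n : ℤ_[p]} (hn : IsUnit n) {t s x y : ℤ_[p]}
    (h : p * (Q.minor * t ^ 2 + s ^ 2) + 4 * n * Q.binary x y = 0) :
    (p : ℤ_[p]) ∣ Q.binary x y := by
  have hsq : 4 ∣ s ^ 2 - (Q.w * t) ^ 2 := four_dvd_sq_sub_sq (p := p)
    ⟨-(n * Q.binary x y + p * Q.a * Q.b * t ^ 2), by
      rw [minor] at h
      linear_combination h⟩
  obtain ⟨k, hk⟩ := hsq
  refine hn.dvd_mul_left.mp ⟨-(Q.a * Q.b * t ^ 2 + k), ?_⟩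
  refine mul_left_cancel₀ (show (4 : ℤ_[p]) ≠ 0 by norm_num) ?_
  rw [minor] at h
  linear_combination h - p * hk

theorem eq_zero_of_minor_mul_sq_add_eq_zero {n : ℤ_[p]} (hn : IsUnit n)
    (hN : Q.halfDisc = p * n) (hm : IsUnit Q.minor) (hns : ¬ IsSquare (-Q.minor))
    {z : Fin 4 → ℤ_[p]}
    (h : Q.minor * z 0 ^ 2 + z 1 ^ 2 + 4 * Q.halfDisc * Q.binary (z 2) (z 3) = 0) : z = 0 := by
  refine eq_zero_of_descent (P := fun z => Q.minor * z 0 ^ 2 + z 1 ^ 2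
    + 4 * Q.halfDisc * Q.binary (z 2) (z 3) = 0) (fun z hz => ?_) h
  have p_ne : (p : ℤ_[p]) ≠ 0 := PadicInt.prime_p.ne_zero
  obtain ⟨⟨t, ht⟩, ⟨s, hs⟩⟩ := dvd_and_dvd_of_add_eq_zero ⟨n, hN⟩ hm hns hz
  obtain ⟨⟨x, hx⟩, ⟨y, hy⟩⟩ := dvd_and_dvd_of_dvd_binary hm hns
    (dvd_binary_of_add_eq_zero hn (t := t) (s := s) (x := z 2) (y := z 3)
      (mul_left_cancel₀ p_ne (by
        rw [hN, ht, hs] at hz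
        linear_combination hz)))
  refine ⟨![t, s, x, y], ?_, mul_left_cancel₀ (pow_ne_zero 2 p_ne) ?_⟩
  · ext1 i
    fin_cases i <;> assumption
  · rw [ht, hs, hx, hy, binary] at hz
    simp only [Matrix.cons_val, binary]
    linear_combination hz

theorem oneAddAdjointAnisotropic_iff_not_isSquare_neg_minor {n : ℤ_[p]} (hn : IsUnit n)
    (hN : Q.halfDisc = p * n) (hm : IsUnit Q.minor) :
    Q.OneAddAdjointAnisotropic ↔ ¬ IsSquare (-Q.minor) := by
  constructor
  · rintro h ⟨s, hs⟩
    have h0 := (h s ![0, 0, 1] (by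
      simp only [adjoint, minor, Matrix.cons_val] at hs ⊢
      linear_combination -hs)).2
    exact one_ne_zero (congrFun h0 2)
  · intro hns t x htx
    have hz := eq_zero_of_minor_mul_sq_add_eq_zero hn hN hm hns
      (z := ![t, Q.linear x, x 0, x 1]) (by
        simp only [Matrix.cons_val]
        linear_combination Q.minor * htx - Q.minor_mul_adjoint x)
    have hx0 : x 0 = 0 := congrFun hz 2
    have hx1 : x 1 = 0 := congrFun hz 3
    have hlin : Q.linear x = 0 := congrFun hz 1
    rw [linear, hx0, hx1, mul_zero, mul_zero, add_zero, add_zero, hm.mul_right_eq_zero] at hlin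
    refine ⟨congrFun hz 0, ?_⟩
    ext1 i
    fin_cases i <;> assumption

theorem mem_range_adjoint_iff_of_dvd_halfDisc (hN : (p : ℤ_[p]) ∣ Q.halfDisc)
    (hsq : ¬ (p : ℤ_[p]) ^ 2 ∣ Q.halfDisc) (hd : IsFundamentalAt (p : ℤ_[p]) (-d)) :
    d ∈ Set.range Q.adjoint ↔
      (p : ℤ_[p]) ∣ d ∨ (Q.OneAddAdjointAnisotropic ↔ ¬ IsSquare (-d)) := by
  obtain ⟨k, hm⟩ := exists_isUnit_minor_of_dvd hN hsq
  rw [← Q.range_adjoint_rotate_iterate k, ← Q.oneAddAdjointAnisotropic_rotate_iterate k]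
  rw [← Q.halfDisc_rotate_iterate k] at hN hsq
  obtain ⟨n, hN'⟩ := hN
  have hn : IsUnit n := by
    rw [isUnit_padicInt_iff_not_dvd]
    rintro ⟨j, rfl⟩
    exact hsq ⟨j, by rw [hN']; ring⟩
  by_cases hpd : (p : ℤ_[p]) ∣ d
  · exact iff_of_true (mem_range_adjoint_of_dvd hn hN' hm hpd hd) (.inl hpd)
  · have hdu : IsUnit d := isUnit_padicInt_iff_not_dvd.mpr hpd
    rw [mem_range_adjoint_iff_isSquare_minor_mul ⟨n, hN'⟩ hm hdu,
      oneAddAdjointAnisotropic_iff_not_isSquare_neg_minor hn hN' hm, ← neg_mul_neg,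
      isSquare_mul_iff hm.neg hdu.neg (isDiscriminant_neg_minor _) hd.1, not_iff_not,
      or_iff_right hpd]

theorem exists_isUnit_apply_of_adjoint_eq (hd : IsFundamentalAt (p : ℤ_[p]) (-d))
    {x : Fin 3 → ℤ_[p]} (hx : Q.adjoint x = d) : ∃ i, IsUnit (x i) := by
  by_contra! hn
  simp only [not_isUnit_padicInt_iff_dvd] at hn
  choose y hy using hn
  obtain rfl : x = (p : ℤ_[p]) • y := funext hy
  exact hd.2 _ (Q.isDiscriminant_neg_adjoint y) (by rw [← hx, adjoint_smul, mul_neg])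

end Padic

end TernaryForm

/-! ### Fundamental discriminants and the decomposition of primes -/

section Decomposition

variable {p : ℕ} [Fact p.Prime] {D d : ℤ}

theorem isDiscriminant_intCast {R : Type*} [CommRing R] (h : D % 4 = 0 ∨ D % 4 = 1) :
    IsDiscriminant (D : R) := by
  rcases h with h | h
  · obtain ⟨m, rfl⟩ : ∃ m, D = 4 * m := ⟨D / 4, by omega⟩
    exact ⟨0, -m, by push_cast; ring⟩
  · obtain ⟨m, rfl⟩ : ∃ m, D = 4 * m + 1 := ⟨D / 4, by omega⟩
    exact ⟨1, -m, by push_cast; ring⟩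

theorem emod_four_of_isDiscriminant_intCast (h : IsDiscriminant (D : ℤ_[2])) :
    D % 4 = 0 ∨ D % 4 = 1 := by
  obtain ⟨b, k, hbk⟩ := h
  have hmod := congrArg (PadicInt.toZModPow 2) hbk
  simp only [map_intCast, map_sub, map_pow, map_mul, map_ofNat] at hmod
  rw [show (4 : ZMod (2 ^ 2)) = 0 from rfl, zero_mul, sub_zero] at hmod
  have sq_mod_four : ∀ r : ZMod (2 ^ 2), r ^ 2 = (0 : ℤ) ∨ r ^ 2 = (1 : ℤ) := by decide
  refine (sq_mod_four (PadicInt.toZModPow 2 b)).imp ?_ ?_ <;>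
  · intro h
    rw [h, ZMod.intCast_eq_intCast_iff] at hmod
    exact hmod

theorem IsFundamentalDiscriminant.emod_four (h : IsFundamentalDiscriminant D) :
    D % 4 = 0 ∨ D % 4 = 1 := by
  obtain ⟨-, h | h⟩ := h
  exacts [.inr h.1, .inl h.1]

theorem IsFundamentalDiscriminant.not_sq_dvd (h : IsFundamentalDiscriminant D) (h2 : p ≠ 2) :
    ¬ (p : ℤ) ^ 2 ∣ D := by
  intro hdvd
  have hp : Prime (p : ℤ) := Nat.prime_iff_prime_int.mp Fact.out
  rw [sq] at hdvd
  obtain ⟨-, ⟨-, hsf⟩ | ⟨h4, hsf, -⟩⟩ := h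
  · exact hp.not_isUnit (hsf p hdvd)
  · refine hp.not_isUnit (hsf p ?_)
    have hcop : IsCoprime (p : ℤ) 2 := by
      exact_mod_cast Nat.isCoprime_iff_coprime.mpr
        ((Nat.coprime_primes Fact.out Nat.prime_two).mpr h2)
    refine IsCoprime.dvd_of_dvd_mul_left (y := 2 * 2)
      ((hcop.mul_right hcop).mul_left (hcop.mul_right hcop)) ?_
    rwa [show (2 : ℤ) * 2 * (D / 4) = D by omega]

theorem IsFundamentalDiscriminant.isFundamentalAt (h : IsFundamentalDiscriminant D) :
    IsFundamentalAt (p : ℤ_[p]) (D : ℤ_[p]) := by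
  refine ⟨isDiscriminant_intCast h.emod_four, fun E hE hDE => ?_⟩
  have sq_dvd : (p : ℤ) ^ 2 ∣ D := (PadicInt.pow_p_dvd_int_iff 2 D).mp ⟨E, hDE⟩
  rcases eq_or_ne p 2 with rfl | h2
  · obtain ⟨m, rfl⟩ := sq_dvd
    obtain rfl : (m : ℤ_[2]) = E :=
      mul_left_cancel₀ (show ((2 : ℕ) : ℤ_[2]) ^ 2 ≠ 0 by norm_num) (by exact_mod_cast hDE)
    have := emod_four_of_isDiscriminant_intCast hE
    obtain ⟨-, h | h⟩ := h <;> push_cast at h <;> omega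
  · exact h.not_sq_dvd h2 sq_dvd

theorem isSquare_intCast_padicInt_two_iff (h : ¬ 2 ∣ D) :
    IsSquare (D : ℤ_[2]) ↔ D % 8 = 1 := by
  constructor
  · rintro ⟨s, hs⟩
    have hmod := congrArg (PadicInt.toZModPow 3) hs
    rw [map_intCast, map_mul] at hmod
    have sq_mod_eight : ∀ r : ZMod (2 ^ 3),
        r * r = (0 : ℤ) ∨ r * r = (1 : ℤ) ∨ r * r = (4 : ℤ) := by decide
    rcases sq_mod_eight (PadicInt.toZModPow 3 s) with h | h | h <;>
    · rw [h, ZMod.intCast_eq_intCast_iff, Int.ModEq] at hmod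
      norm_num at hmod
      omega
  · intro h8
    obtain ⟨m, rfl⟩ : ∃ m, D = 8 * m + 1 := ⟨D / 8, by omega⟩
    refine isSquare_of_dvd_sub_sq (s := 1) ?_ ⟨m, by push_cast; ring⟩
    rw [isUnit_padicInt_iff_not_dvd, dvd_intCast_padicInt_iff]
    exact_mod_cast h

theorem legendreSym_eq_one_iff (h2 : p ≠ 2) :
    legendreSym p D = 1 ↔ ¬ (p : ℤ) ∣ D ∧ IsSquare (D : ℤ_[p]) := by
  by_cases hp : (p : ℤ) ∣ D
  · rw [(legendreSym.eq_zero_iff p D).mpr ((ZMod.intCast_zmod_eq_zero_iff_dvd _ _).mpr hp)]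
    simp [hp]
  · have hu : IsUnit (D : ℤ_[p]) := by rwa [isUnit_padicInt_iff_not_dvd, dvd_intCast_padicInt_iff]
    rw [legendreSym.eq_one_iff p (by rwa [Ne, ZMod.intCast_zmod_eq_zero_iff_dvd]),
      ← isSquare_toZMod_iff h2 hu, map_intCast, and_iff_right hp]

theorem legendreSym_eq_neg_one_iff (h2 : p ≠ 2) :
    legendreSym p D = -1 ↔ ¬ (p : ℤ) ∣ D ∧ ¬ IsSquare (D : ℤ_[p]) := by
  by_cases hp : (p : ℤ) ∣ D
  · rw [(legendreSym.eq_zero_iff p D).mpr ((ZMod.intCast_zmod_eq_zero_iff_dvd _ _).mpr hp)]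
    simp [hp]
  · have hu : IsUnit (D : ℤ_[p]) := by rwa [isUnit_padicInt_iff_not_dvd, dvd_intCast_padicInt_iff]
    rw [legendreSym.eq_neg_one_iff, ← isSquare_toZMod_iff h2 hu, map_intCast, and_iff_right hp]

theorem splitIn_iff (hp : p.Prime) :
    SplitIn d p hp ↔ ¬ (p : ℤ) ∣ d ∧ IsSquare (-d : ℤ_[p]) := by
  rw [← Int.dvd_neg, ← Int.cast_neg]
  rcases eq_or_ne p 2 with rfl | h2
  · rw [SplitIn, if_pos rfl]
    refine ⟨fun h => ?_, fun h =>
      (isSquare_intCast_padicInt_two_iff (by exact_mod_cast h.1)).mp h.2⟩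
    have hodd : ¬ 2 ∣ -d := by omega
    exact ⟨by exact_mod_cast hodd, (isSquare_intCast_padicInt_two_iff hodd).mpr h⟩
  · rw [SplitIn, if_neg h2]
    exact legendreSym_eq_one_iff h2

theorem inertIn_iff (hp : p.Prime) (hd : IsFundamentalDiscriminant (-d)) :
    InertIn d p hp ↔ ¬ (p : ℤ) ∣ d ∧ ¬ IsSquare (-d : ℤ_[p]) := by
  rw [← Int.dvd_neg, ← Int.cast_neg]
  rcases eq_or_ne p 2 with rfl | h2
  · rw [InertIn, if_pos rfl]
    have h4 := hd.emod_four
    by_cases hodd : 2 ∣ -d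
    · exact iff_of_false (by omega) fun h => h.1 (by exact_mod_cast hodd)
    · rw [isSquare_intCast_padicInt_two_iff hodd]
      push_cast
      omega
  · rw [InertIn, if_neg h2]
    exact legendreSym_eq_neg_one_iff h2

end Decomposition

/-! ### The quaternary forms `⟨1⟩ ⊥ M` -/

section OneAddAnisotropic

variable {n R : Type*} [Fintype n] [CommRing R] {M : Matrix n n R}

/-- The quadratic form `t² + xᵀ M x`, in one variable more than `M` has, is anisotropic. -/
def OneAddAnisotropic (M : Matrix n n R) : Prop :=
  ∀ (t : R) (x : n → R), t ^ 2 + x ⬝ᵥ M *ᵥ x = 0 → t = 0 ∧ x = 0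

theorem dotProduct_map_mulVec {S : Type*} [CommRing S] (φ : R →+* S) (x : n → R) :
    (φ ∘ x) ⬝ᵥ M.map φ *ᵥ (φ ∘ x) = φ (x ⬝ᵥ M *ᵥ x) := by
  rw [RingHom.map_dotProduct]
  congr 1
  exact funext fun i => (RingHom.map_mulVec φ M x i).symm

theorem OneAddAnisotropic.mul_mul_transpose [DecidableEq n] {F : Matrix n n R}
    (hM : OneAddAnisotropic M) (hF : IsUnit F.det) : OneAddAnisotropic (F * M * Fᵀ) := by
  intro t x h
  have hFx : x ⬝ᵥ (F * M * Fᵀ) *ᵥ x = (Fᵀ *ᵥ x) ⬝ᵥ M *ᵥ (Fᵀ *ᵥ x) := by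
    rw [← Matrix.mulVec_mulVec, ← Matrix.mulVec_mulVec, Matrix.dotProduct_mulVec,
      Matrix.mulVec_transpose]
  obtain ⟨ht, hx⟩ := hM t (Fᵀ *ᵥ x) (hFx ▸ h)
  refine ⟨ht, Matrix.mulVec_injective_of_isUnit ?_ (hx.trans (Matrix.mulVec_zero _).symm)⟩
  rwa [Matrix.isUnit_iff_isUnit_det, Matrix.det_transpose]

theorem oneAddAnisotropic_mul_mul_transpose_iff [DecidableEq n] {F : Matrix n n R}
    (hF : IsUnit F.det) : OneAddAnisotropic (F * M * Fᵀ) ↔ OneAddAnisotropic M := by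
  refine ⟨fun h => ?_, fun h => h.mul_mul_transpose hF⟩
  have hM : M = F⁻¹ * (F * M * Fᵀ) * F⁻¹ᵀ := by
    rw [Matrix.transpose_nonsing_inv, Matrix.mul_assoc F, Matrix.nonsing_inv_mul_cancel_left _ _ hF,
      Matrix.mul_nonsing_inv_cancel_right _ _ (by rwa [Matrix.det_transpose])]
  exact hM ▸ h.mul_mul_transpose (Matrix.isUnit_nonsing_inv_det F hF)

theorem oneAddAnisotropic_map_algebraMap_iff [IsDomain R] {K : Type*} [Field K] [Algebra R K]
    [IsFractionRing R K] :
    OneAddAnisotropic (M.map (algebraMap R K)) ↔ OneAddAnisotropic M := by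
  have hinj := IsFractionRing.injective R K
  constructor
  · intro h t x htx
    have htx' := congrArg (algebraMap R K) htx
    rw [map_add, map_pow, ← dotProduct_map_mulVec, map_zero] at htx'
    obtain ⟨ht, hx⟩ := h _ _ htx'
    exact ⟨(map_eq_zero_iff _ hinj).mp ht,
      funext fun i => (map_eq_zero_iff _ hinj).mp (congrFun hx i)⟩
  · intro h t x htx
    obtain ⟨c, hc⟩ := IsLocalization.exist_integer_multiples_of_finite (nonZeroDivisors R)
      (fun i : Option n => i.elim t x)
    choose y hy using hc
    have hc0 : algebraMap R K c ≠ 0 := IsLocalization.to_map_ne_zero_of_mem_nonZeroDivisors K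
      le_rfl c.2
    have ht : algebraMap R K (y none) = algebraMap R K c * t := by
      rw [hy, Algebra.smul_def, Option.elim_none]
    have hx : algebraMap R K ∘ (y ∘ some) = algebraMap R K c • x := by
      ext i
      simp [hy, Algebra.smul_def]
    have hyy : algebraMap R K (y none ^ 2 + (y ∘ some) ⬝ᵥ M *ᵥ (y ∘ some)) = 0 := by
      rw [map_add, map_pow, ← dotProduct_map_mulVec, ht, hx, Matrix.mulVec_smul, smul_dotProduct,
        dotProduct_smul, smul_eq_mul, smul_eq_mul]
      linear_combination algebraMap R K c ^ 2 * htx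
    obtain ⟨hy0, hys⟩ := h _ _ ((map_eq_zero_iff _ hinj).mp hyy)
    rw [hy0, map_zero, zero_eq_mul, or_iff_right hc0] at ht
    rw [hys, Pi.comp_zero, map_zero] at hx
    exact ⟨ht, (smul_eq_zero_iff_right hc0).mp hx.symm⟩

end OneAddAnisotropic

namespace TernaryForm

variable {R S : Type*} [CommRing R] [CommRing S]

/-- Base change of a ternary form along a ring homomorphism. -/
def map (φ : R →+* S) (Q : TernaryForm R) : TernaryForm S :=
  ⟨φ Q.a, φ Q.b, φ Q.c, φ Q.u, φ Q.v, φ Q.w⟩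

theorem matrix_map (φ : R →+* S) (Q : TernaryForm R) : (Q.map φ).matrix = Q.matrix.map φ := by
  ext i j
  fin_cases i <;> fin_cases j <;> simp [matrix, map, map_ofNat]

theorem adjugate_matrix_map (φ : R →+* S) (Q : TernaryForm R) :
    (Q.map φ).matrix.adjugate = Q.matrix.adjugate.map φ := by
  rw [matrix_map]
  exact (RingHom.map_adjugate φ Q.matrix).symm

theorem halfDisc_map (φ : R →+* S) (Q : TernaryForm R) : (Q.map φ).halfDisc = φ Q.halfDisc := by
  simp [halfDisc, map, map_ofNat]

theorem oneAddAnisotropic_adjugate_iff (Q : TernaryForm R) :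
    OneAddAnisotropic Q.matrix.adjugate ↔ Q.OneAddAdjointAnisotropic := by
  simp only [OneAddAnisotropic, OneAddAdjointAnisotropic, dotProduct_adjugate_mulVec]

theorem exists_matrix_eq {K : Matrix (Fin 3) (Fin 3) R} (hK : K.IsSymm) (h : ∀ s, Even (K s s)) :
    ∃ Q : TernaryForm R, Q.matrix = K := by
  choose e he using h
  refine ⟨⟨e 0, e 1, e 2, K 1 2, K 0 2, K 0 1⟩, ?_⟩
  ext i j
  fin_cases i <;> fin_cases j <;>
    simp [matrix, he, two_mul, hK.apply 0 1, hK.apply 0 2, hK.apply 1 2]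

end TernaryForm

/-! ### Gram matrices of lattices -/

section Gram

variable {V : Type*} [AddCommGroup V] [Module ℚ V] (B : LinearMap.BilinForm ℚ V)
  {ι : Type*} [Fintype ι]

/-- The matrix of values of a bilinear form on a family of vectors. -/
def gram {ι : Type*} (v : ι → V) : Matrix ι ι ℚ :=
  Matrix.of fun i j => B (v i) (v j)

theorem gram_sum_smul (U : Matrix ι ι ℚ) (v : ι → V) :
    gram B (fun i => ∑ j, U i j • v j) = U * gram B v * Uᵀ := by
  ext i j
  simp only [gram, Matrix.of_apply, Matrix.mul_apply, Matrix.transpose_apply, map_sum, map_smul,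
    LinearMap.sum_apply, LinearMap.smul_apply, smul_eq_mul, mul_comm]

variable [DecidableEq ι]

theorem exists_det_gram_eq_sq_mul {v w : ι → V}
    (h : ∀ i, w i ∈ Submodule.span ℤ (Set.range v)) :
    ∃ c : ℤ, (gram B w).det = (c : ℚ) ^ 2 * (gram B v).det := by
  choose U hU using fun i => (Submodule.mem_span_range_iff_exists_fun ℤ).mp (h i)
  refine ⟨(Matrix.of U).det, ?_⟩
  have hw : w = fun i => ∑ j, (Matrix.of U).map (Int.cast : ℤ → ℚ) i j • v j := by
    ext i
    simp [← hU i, Int.cast_smul_eq_zsmul]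
  rw [hw, gram_sum_smul, Matrix.det_mul, Matrix.det_mul, Matrix.det_transpose, ← Int.cast_det]
  ring

theorem det_gram_eq_of_span_eq {v w : ι → V}
    (h : Submodule.span ℤ (Set.range v) = Submodule.span ℤ (Set.range w)) :
    (gram B v).det = (gram B w).det := by
  obtain ⟨c, hc⟩ := exists_det_gram_eq_sq_mul B (v := v) (w := w)
    fun i => h ▸ Submodule.subset_span ⟨i, rfl⟩
  obtain ⟨e, he⟩ := exists_det_gram_eq_sq_mul B (v := w) (w := v)
    fun i => h ▸ Submodule.subset_span ⟨i, rfl⟩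
  rcases eq_or_ne (gram B v).det 0 with h0 | h0
  · rw [hc, h0, mul_zero]
  have hce : ((e * c : ℤ) : ℚ) ^ 2 = 1 := by
    apply mul_right_cancel₀ h0
    push_cast
    linear_combination -he - (e : ℚ) ^ 2 * hc
  have hc1 : IsUnit c := isUnit_of_mul_isUnit_right
    ((isUnit_pow_iff two_ne_zero).mp ((by exact_mod_cast hce : (e * c) ^ 2 = 1) ▸ isUnit_one))
  have hc2 : (c : ℚ) ^ 2 = 1 := by exact_mod_cast Int.isUnit_sq hc1
  rw [hc, hc2, one_mul]

theorem det_gram_cons {n : ℕ} {x : V} {v : Fin n → V} (h : ∀ i, B x (v i) = 0) :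
    (gram B (Fin.cons x v : Fin (n + 1) → V)).det = B x x * (gram B v).det := by
  have hsub : (gram B (Fin.cons x v : Fin (n + 1) → V)).submatrix Fin.succ Fin.succ =
      gram B v := rfl
  rw [Matrix.det_succ_row_zero, Fin.sum_univ_succ, Fin.succAbove_zero, hsub,
    Finset.sum_eq_zero fun i _ => by simp [gram, h]]
  simp [gram]

theorem det_gram_cons_smul_add_smul {n : ℕ} (c : ℚ) {x : V} {v w : Fin n → V} {m : Fin n → ℚ}
    (h : ∀ i, w i = m i • x + c • v i) :
    (gram B (Fin.cons x w : Fin (n + 1) → V)).det =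
      c ^ (2 * n) * (gram B (Fin.cons x v : Fin (n + 1) → V)).det := by
  let U : Matrix (Fin (n + 1)) (Fin (n + 1)) ℚ :=
    Matrix.of (Fin.cons (Pi.single 0 1) fun i => Fin.cons (m i) (Pi.single i c))
  have hU : U.det = c ^ n := by
    have hsub : U.submatrix Fin.succ Fin.succ = Matrix.diagonal fun _ => c := by
      ext i j
      simp [U, Matrix.diagonal_apply, Pi.single_apply, eq_comm]
    rw [Matrix.det_succ_row_zero, Fin.sum_univ_succ, Fin.succAbove_zero, hsub,
      Finset.sum_eq_zero fun i _ => by simp [U]]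
    simp [U]
  have hw : (Fin.cons x w : Fin (n + 1) → V) =
      fun i => ∑ j, U i j • (Fin.cons x v : Fin (n + 1) → V) j := by
    ext i
    refine Fin.cases ?_ (fun i => ?_) i <;> simp [U, h, Fin.sum_univ_succ, Pi.single_apply]
  rw [hw, gram_sum_smul, Matrix.det_mul, Matrix.det_mul, Matrix.det_transpose, hU]
  ring

end Gram

theorem exists_linearIndependent_span_int_eq {V : Type*} [AddCommGroup V] [Module ℚ V]
    {L : Submodule ℤ V} (hL : L.FG) :
    ∃ v : Fin (Module.finrank ℚ (Submodule.span ℚ (L : Set V))) → V,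
      LinearIndependent ℚ v ∧ Submodule.span ℤ (Set.range v) = L := by
  have : Module.Finite ℤ L := Module.Finite.iff_fg.mpr hL
  have : Module.IsTorsionFree ℤ V := Module.IsTorsionFree.trans_faithfulSMul ℤ ℚ _
  let b := Module.finBasis ℤ L
  have hspan : Submodule.span ℤ (Set.range fun i => (b i : V)) = L := by
    have h := congrArg (Submodule.map L.subtype) b.span_eq
    rwa [Submodule.map_span, Submodule.map_top, Submodule.range_subtype, ← Set.range_comp] at h
  have hli : LinearIndependent ℚ fun i => (b i : V) :=
    (LinearIndependent.iff_fractionRing ℤ ℚ).mp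
      (b.linearIndependent.map' L.subtype (Submodule.ker_subtype _))
  have hrank : Module.finrank ℚ (Submodule.span ℚ (L : Set V)) = Module.finrank ℤ L := by
    conv_lhs => rw [← hspan]
    rw [Submodule.span_span_of_tower, finrank_span_eq_card hli, Fintype.card_fin]
  rw [hrank]
  exact ⟨_, hli, hspan⟩

/-! ### Quaternion algebras -/

section Quaternion

variable {R : Type*} [CommRing R] {a b : R}

/-- The coordinates of the pure part of a quaternion with respect to `i, j, k`. -/
def pureCoords : ℍ[R,a,b] →ₗ[R] Fin 3 → R :=
  LinearMap.pi ![QuaternionAlgebra.imIₗ a 0 b, QuaternionAlgebra.imJₗ a 0 b,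
    QuaternionAlgebra.imKₗ a 0 b]

/-- The matrix of the norm form on pure quaternions with respect to `i, j, k`. -/
def pureNormMatrix (a b : R) : Matrix (Fin 3) (Fin 3) R :=
  Matrix.diagonal ![-a, -b, a * b]

theorem pureCoords_apply (x : ℍ[R,a,b]) : pureCoords x = ![x.imI, x.imJ, x.imK] := by
  ext i
  fin_cases i <;> rfl

theorem pureCoords_one : pureCoords (1 : ℍ[R,a,b]) = 0 := by
  ext i
  fin_cases i <;> rfl

theorem re_mul_star (x y : ℍ[R,a,b]) :
    (x * star y).re = x.re * y.re + pureCoords x ⬝ᵥ pureNormMatrix a b *ᵥ pureCoords y := by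
  simp only [pureCoords_apply, pureNormMatrix, dotProduct, Matrix.mulVec_diagonal,
    Fin.sum_univ_three, Matrix.cons_val, QuaternionAlgebra.re_mul, QuaternionAlgebra.re_star,
    QuaternionAlgebra.imI_star, QuaternionAlgebra.imJ_star, QuaternionAlgebra.imK_star]
  ring

theorem pureCoords_mul_dotProduct {x y : ℍ[R,a,b]} (hx : x.re = 0) (hy : y.re = 0)
    (z : ℍ[R,a,b]) :
    pureCoords (x * y) ⬝ᵥ pureNormMatrix a b *ᵥ pureCoords z =
      a * b * (Matrix.of ![pureCoords x, pureCoords y, pureCoords z]).det := by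
  simp only [pureCoords_apply, pureNormMatrix, dotProduct, Matrix.mulVec_diagonal,
    Fin.sum_univ_three, Matrix.cons_val, Matrix.det_fin_three, Matrix.of_apply,
    QuaternionAlgebra.imI_mul, QuaternionAlgebra.imJ_mul, QuaternionAlgebra.imK_mul, hx, hy]
  ring

theorem det_pureNormMatrix : (pureNormMatrix a b).det = (a * b) ^ 2 := by
  rw [pureNormMatrix, Matrix.det_diagonal, Fin.prod_univ_three]
  simp only [Matrix.cons_val]
  ring

theorem isSymm_pureNormMatrix : (pureNormMatrix a b).IsSymm :=
  Matrix.isSymm_diagonal _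

theorem pureNormMatrix_map {S : Type*} [CommRing S] (φ : R →+* S) :
    (pureNormMatrix a b).map φ = pureNormMatrix (φ a) (φ b) := by
  rw [pureNormMatrix, Matrix.diagonal_map (map_zero φ), pureNormMatrix]
  congr 1
  ext i
  fin_cases i <;> simp

theorem forall_isUnit_iff_oneAddAnisotropic {F : Type*} [Field F] {a b : F} :
    (∀ x : ℍ[F,a,b], x ≠ 0 → IsUnit x) ↔ OneAddAnisotropic (pureNormMatrix a b) := by
  have hnorm (x : ℍ[F,a,b]) : (x * star x).re =
      x.re ^ 2 + pureCoords x ⬝ᵥ pureNormMatrix a b *ᵥ pureCoords x := by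
    rw [re_mul_star, sq]
  have hzero (x : ℍ[F,a,b]) : x = 0 ↔ x.re = 0 ∧ pureCoords x = 0 := by
    simp [QuaternionAlgebra.ext_iff, pureCoords_apply]
  constructor
  · intro h t v htv
    let x : ℍ[F,a,b] := ⟨t, v 0, v 1, v 2⟩
    have hv : pureCoords x = v := by
      rw [pureCoords_apply]
      ext i
      fin_cases i <;> rfl
    have hx : x * star x = 0 := by
      rw [QuaternionAlgebra.mul_star_eq_coe, hnorm, hv, htv, QuaternionAlgebra.coe_zero]
    have hx0 : x = 0 := by
      by_contra hne
      exact hne (star_eq_zero.mp ((h x hne).mul_right_eq_zero.mp hx))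
    rw [← hv]
    exact (hzero x).mp hx0
  · intro h x hx
    have hn : (x * star x).re ≠ 0 := fun h0 =>
      hx ((hzero x).mpr (h _ _ ((hnorm x).symm.trans h0)))
    have hinv : x * ((x * star x).re⁻¹ • star x) = 1 := by
      rw [mul_smul_comm, QuaternionAlgebra.mul_star_eq_coe, QuaternionAlgebra.re_coe,
        QuaternionAlgebra.smul_coe, inv_mul_cancel₀ hn, QuaternionAlgebra.coe_one]
    have hinv' : ((x * star x).re⁻¹ • star x) * x = 1 := by
      rw [smul_mul_assoc, star_comm_self', ← mul_smul_comm, hinv]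
    exact ⟨⟨x, _, hinv, hinv'⟩, rfl⟩

theorem ramifiedAt_iff_oneAddAnisotropic {a b : ℚ} {p : ℕ} [hp : Fact p.Prime] :
    RamifiedAt a b p hp.out ↔
      OneAddAnisotropic (pureNormMatrix (a : ℚ_[p]) (b : ℚ_[p])) :=
  forall_isUnit_iff_oneAddAnisotropic

theorem ramifiedAt_iff_oneAddAdjointAnisotropic {a b : ℚ} {F : Matrix (Fin 3) (Fin 3) ℚ}
    {Q : TernaryForm ℤ} (hF : F.det ≠ 0)
    (hQ : F * pureNormMatrix a b * Fᵀ = Q.matrix.adjugate.map (Int.cast : ℤ → ℚ))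
    {p : ℕ} [hp : Fact p.Prime] :
    RamifiedAt a b p hp.out ↔ (Q.map (Int.castRingHom ℤ_[p])).OneAddAdjointAnisotropic := by
  let φ : ℚ →+* ℚ_[p] := Rat.castHom ℚ_[p]
  have hFp : IsUnit (F.map φ).det := by
    rw [← RingHom.mapMatrix_apply, ← RingHom.map_det]
    exact ((map_ne_zero φ).mpr hF).isUnit
  have hQp : F.map φ * pureNormMatrix (a : ℚ_[p]) (b : ℚ_[p]) * (F.map φ)ᵀ =
      ((Q.map (Int.castRingHom ℤ_[p])).matrix.adjugate).map (algebraMap ℤ_[p] ℚ_[p]) := by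
    have h := congrArg (fun M => M.map φ) hQ
    simp only [Matrix.map_mul, pureNormMatrix_map, Matrix.map_map, Matrix.transpose_map] at h
    rw [TernaryForm.adjugate_matrix_map, Matrix.map_map]
    refine h.trans (congrArg _ (funext fun n => ?_))
    simp [φ]
  rw [ramifiedAt_iff_oneAddAnisotropic, ← oneAddAnisotropic_mul_mul_transpose_iff hFp, hQp,
    oneAddAnisotropic_map_algebraMap_iff, TernaryForm.oneAddAnisotropic_adjugate_iff]

end Quaternion

/-! ### The ternary lattice of a quaternion order -/

section Matrix

variable {n K : Type*} [Fintype n] [DecidableEq n] [Field K] {A M : Matrix n n K} {τ : K}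

theorem isSymm_of_mul_eq_smul_one (hτ : τ ≠ 0) (hM : M.IsSymm) (h : A * M = τ • 1) :
    A.IsSymm := by
  have hT : M * Aᵀ = τ • 1 := by
    have h' := congrArg Matrix.transpose h
    rwa [Matrix.transpose_mul, hM.eq, Matrix.transpose_smul, Matrix.transpose_one] at h'
  refine smul_right_injective _ hτ ?_
  calc τ • Aᵀ = A * M * Aᵀ := by rw [h, smul_mul_assoc, one_mul]
    _ = τ • A := by rw [Matrix.mul_assoc, hT, mul_smul_comm, mul_one]

theorem eq_adjugate_of_mul_eq_det_smul_one (hA : A.det ≠ 0) (h : A * M = A.det • 1) :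
    M = A.adjugate := by
  refine smul_right_injective _ hA ?_
  calc A.det • M = A.adjugate * A * M := by rw [Matrix.adjugate_mul, smul_mul_assoc, one_mul]
    _ = A.det • A.adjugate := by rw [Matrix.mul_assoc, h, mul_smul_comm, mul_one]

end Matrix

section CoordMatrix

variable {R : Type*} [CommRing R] {a b : R}

/-- The matrix whose rows are the pure coordinates of three quaternions. -/
def coordMatrix (f : Fin 3 → ℍ[R,a,b]) : Matrix (Fin 3) (Fin 3) R :=
  Matrix.of fun i => pureCoords (f i)

/-- The Gram matrix of the pure parts of three quaternions for the norm form. -/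
def pureGram (f : Fin 3 → ℍ[R,a,b]) : Matrix (Fin 3) (Fin 3) R :=
  coordMatrix f * pureNormMatrix a b * (coordMatrix f)ᵀ

theorem isSymm_pureGram (f : Fin 3 → ℍ[R,a,b]) : (pureGram f).IsSymm := by
  rw [Matrix.IsSymm, pureGram, Matrix.transpose_mul, Matrix.transpose_mul,
    Matrix.transpose_transpose, isSymm_pureNormMatrix.eq, Matrix.mul_assoc]

theorem det_pureGram (f : Fin 3 → ℍ[R,a,b]) :
    (pureGram f).det = (a * b * (coordMatrix f).det) ^ 2 := by
  rw [pureGram, Matrix.det_mul, Matrix.det_mul, Matrix.det_transpose, det_pureNormMatrix]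
  ring

theorem pureGram_apply (f : Fin 3 → ℍ[R,a,b]) (i j : Fin 3) :
    pureGram f i j = pureCoords (f i) ⬝ᵥ pureNormMatrix a b *ᵥ pureCoords (f j) := by
  rw [pureGram, Matrix.mul_assoc]
  rfl

/-- `A` is the matrix of structure constants for the pure parts of the products
`f 1 * f 2`, `f 2 * f 0`, `f 0 * f 1`. -/
def IsStructureMatrix (A : Matrix (Fin 3) (Fin 3) R) (f : Fin 3 → ℍ[R,a,b]) : Prop :=
  ∀ s, pureCoords (f (s + 1) * f (s + 2)) = ∑ k, A s k • pureCoords (f k)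

theorem IsStructureMatrix.mul_pureGram {A : Matrix (Fin 3) (Fin 3) R} {f : Fin 3 → ℍ[R,a,b]}
    (hA : IsStructureMatrix A f) (hf : ∀ k, (f k).re = 0) :
    A * pureGram f = (a * b * (coordMatrix f).det) • 1 := by
  ext s t
  have hdet : (Matrix.of ![pureCoords (f (s + 1)), pureCoords (f (s + 2)), pureCoords (f t)]).det =
      if s = t then (coordMatrix f).det else 0 := by
    fin_cases s <;> fin_cases t <;>
      simp [coordMatrix, Matrix.det_fin_three] <;> ring
  calc (A * pureGram f) s t
      = pureCoords (f (s + 1) * f (s + 2)) ⬝ᵥ pureNormMatrix a b *ᵥ pureCoords (f t) := by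
        simp only [hA s, Matrix.mul_apply, pureGram_apply, sum_dotProduct, smul_dotProduct,
          smul_eq_mul]
    _ = ((a * b * (coordMatrix f).det) • (1 : Matrix (Fin 3) (Fin 3) R)) s t := by
        rw [pureCoords_mul_dotProduct (hf _) (hf _), hdet, Matrix.smul_apply, Matrix.one_apply,
          smul_eq_mul]
        split_ifs <;> simp

section Field

variable {F : Type*} [Field F] {a b : F} {A : Matrix (Fin 3) (Fin 3) F} {f : Fin 3 → ℍ[F,a,b]}

theorem IsStructureMatrix.det_eq (hA : IsStructureMatrix A f) (hf : ∀ k, (f k).re = 0)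
    (hτ : a * b * (coordMatrix f).det ≠ 0) : A.det = a * b * (coordMatrix f).det := by
  have h := congrArg Matrix.det (hA.mul_pureGram hf)
  rw [Matrix.det_mul, det_pureGram, Matrix.det_smul, Matrix.det_one, Fintype.card_fin, mul_one] at h
  exact mul_right_cancel₀ (pow_ne_zero 2 hτ) (h.trans (pow_succ' _ 2))

theorem IsStructureMatrix.isSymm (hA : IsStructureMatrix A f) (hf : ∀ k, (f k).re = 0)
    (hτ : a * b * (coordMatrix f).det ≠ 0) : A.IsSymm :=
  isSymm_of_mul_eq_smul_one hτ (isSymm_pureGram f) (hA.mul_pureGram hf)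

theorem IsStructureMatrix.pureGram_eq_adjugate (hA : IsStructureMatrix A f)
    (hf : ∀ k, (f k).re = 0) (hτ : a * b * (coordMatrix f).det ≠ 0) :
    pureGram f = A.adjugate := by
  have hdet := hA.det_eq hf hτ
  exact eq_adjugate_of_mul_eq_det_smul_one (hdet ▸ hτ) (hdet ▸ hA.mul_pureGram hf)

end Field

end CoordMatrix

section Order

variable {a b : ℚ} {O : Submodule ℤ ℍ[ℚ,a,b]}

theorem qbil_eq (x y : ℍ[ℚ,a,b]) : qbil x y =
    2 * (x.re * y.re + pureCoords x ⬝ᵥ pureNormMatrix a b *ᵥ pureCoords y) := by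
  rw [qbil, QuaternionAlgebra.re_add, re_mul_star, re_mul_star, mul_comm y.re,
    Matrix.dotProduct_mulVec (pureCoords y), ← Matrix.mulVec_transpose,
    isSymm_pureNormMatrix.eq, dotProduct_comm (_ *ᵥ _), two_mul]

theorem qbil_one_right (x : ℍ[ℚ,a,b]) : qbil x 1 = trd x := by
  rw [qbil_eq, pureCoords_one, Matrix.mulVec_zero, dotProduct_zero, QuaternionAlgebra.re_one, trd]
  ring

theorem qbil_one_left (x : ℍ[ℚ,a,b]) : qbil 1 x = trd x := by
  rw [qbil_eq, pureCoords_one, zero_dotProduct, QuaternionAlgebra.re_one, trd]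
  ring

/-- `qbil` as a bilinear form. -/
def qbilForm (a b : ℚ) : LinearMap.BilinForm ℚ ℍ[ℚ,a,b] :=
  LinearMap.mk₂ ℚ qbil
    (fun x y z => by simp only [qbil_eq, map_add, add_dotProduct, QuaternionAlgebra.re_add]; ring)
    (fun c x y => by
      simp only [qbil_eq, map_smul, smul_dotProduct, QuaternionAlgebra.re_smul, smul_eq_mul]; ring)
    (fun x y z => by
      simp only [qbil_eq, map_add, Matrix.mulVec_add, dotProduct_add, QuaternionAlgebra.re_add]
      ring)
    (fun c x y => by
      simp only [qbil_eq, map_smul, Matrix.mulVec_smul, dotProduct_smul, QuaternionAlgebra.re_smul,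
        smul_eq_mul]
      ring)

theorem gram_qbilForm {f : Fin 3 → ℍ[ℚ,a,b]} (hf : ∀ k, (f k).re = 0) :
    gram (qbilForm a b) f = (2 : ℚ) • pureGram f := by
  ext i j
  rw [Matrix.smul_apply, pureGram_apply, smul_eq_mul]
  refine (qbil_eq _ _).trans ?_
  rw [hf, zero_mul, zero_add]

theorem exists_int_qbil {N : ℕ} (hdisc : HasReducedDiscriminant O N) {x y : ℍ[ℚ,a,b]}
    (hx : x ∈ O) (hy : y ∈ O) : ∃ m : ℤ, qbil x y = m := by
  obtain ⟨A, ⟨v, -, hv, hA⟩, -⟩ := hdisc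
  rw [Submodule.span_eq] at hv
  rw [← hv, Submodule.mem_span_range_iff_exists_fun] at hx hy
  obtain ⟨c, rfl⟩ := hx
  obtain ⟨e, rfl⟩ := hy
  refine ⟨∑ j, e j * ∑ i, c i * A i j, ?_⟩
  change qbilForm a b _ _ = _
  simp only [← Int.cast_smul_eq_zsmul ℚ, map_sum, map_smul, LinearMap.sum_apply,
    LinearMap.smul_apply, smul_eq_mul]
  push_cast [hA]
  rfl

theorem exists_int_trd {N : ℕ} (h1 : 1 ∈ O) (hdisc : HasReducedDiscriminant O N)
    {x : ℍ[ℚ,a,b]} (hx : x ∈ O) : ∃ m : ℤ, trd x = m :=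
  qbil_one_right x ▸ exists_int_qbil hdisc hx h1

/-- The lattice `{x ∈ ℤ·1 + 2O : tr(x) = 0}`. -/
def traceZeroLattice (O : Submodule ℤ ℍ[ℚ,a,b]) : Submodule ℤ ℍ[ℚ,a,b] where
  carrier := {x | (∃ m : ℤ, ∃ r ∈ O, x = m • (1 : ℍ[ℚ,a,b]) + 2 • r) ∧ x + star x = 0}
  add_mem' := by
    rintro x y ⟨⟨m, r, hr, rfl⟩, hx⟩ ⟨⟨n, s, hs, rfl⟩, hy⟩
    refine ⟨⟨m + n, r + s, O.add_mem hr hs, by module⟩, ?_⟩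
    rw [star_add, add_add_add_comm, hx, hy, add_zero]
  zero_mem' := ⟨⟨0, 0, O.zero_mem, by simp⟩, by simp⟩
  smul_mem' := by
    rintro c x ⟨⟨m, r, hr, rfl⟩, hx⟩
    refine ⟨⟨c * m, c • r, O.smul_mem c hr, by module⟩, ?_⟩
    rw [star_zsmul, ← smul_add, hx, smul_zero]

theorem re_eq_zero_of_mem_traceZeroLattice {x : ℍ[ℚ,a,b]} (hx : x ∈ traceZeroLattice O) :
    x.re = 0 := by
  simpa using congrArg QuaternionAlgebra.re hx.2

theorem traceZeroLattice_le (h1 : 1 ∈ O) : traceZeroLattice O ≤ O := by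
  rintro x ⟨⟨m, r, hr, rfl⟩, -⟩
  exact O.add_mem (O.smul_mem m h1) (O.smul_mem 2 hr)

theorem sub_star_eq_of_trd_eq {x : ℍ[ℚ,a,b]} {m : ℤ} (hm : trd x = m) :
    x - star x = (-m) • (1 : ℍ[ℚ,a,b]) + 2 • x := by
  have hm' : 2 * x.re = m := hm
  ext <;> simp [two_mul, ← hm']

theorem sub_star_mem_traceZeroLattice (htr : ∀ x ∈ O, ∃ m : ℤ, trd x = m) {x : ℍ[ℚ,a,b]}
    (hx : x ∈ O) : x - star x ∈ traceZeroLattice O := by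
  obtain ⟨m, hm⟩ := htr x hx
  exact ⟨⟨-m, x, hx, sub_star_eq_of_trd_eq hm⟩, by rw [star_sub, star_star]; abel⟩

theorem exists_mul_eq_of_mem_traceZeroLattice (htr : ∀ x ∈ O, ∃ m : ℤ, trd x = m)
    (hmul : ∀ x ∈ O, ∀ y ∈ O, x * y ∈ O) {x y : ℍ[ℚ,a,b]} (hx : x ∈ traceZeroLattice O)
    (hy : y ∈ traceZeroLattice O) :
    ∃ c m n : ℤ, ∃ z ∈ traceZeroLattice O,
      x * y = c • (1 : ℍ[ℚ,a,b]) + m • y + n • x + (2 : ℤ) • z := by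
  obtain ⟨⟨m, r, hr, rfl⟩, -⟩ := hx
  obtain ⟨⟨n, s, hs, rfl⟩, -⟩ := hy
  obtain ⟨t, ht⟩ := htr _ (hmul r hr s hs)
  refine ⟨2 * t - m * n, m, n, _, sub_star_mem_traceZeroLattice htr (hmul r hr s hs), ?_⟩
  rw [sub_star_eq_of_trd_eq ht]
  simp only [add_mul, mul_add, smul_mul_assoc, mul_smul_comm, one_mul, mul_one]
  module

theorem exists_isStructureMatrix (htr : ∀ x ∈ O, ∃ m : ℤ, trd x = m)
    (hmul : ∀ x ∈ O, ∀ y ∈ O, x * y ∈ O) {f : Fin 3 → ℍ[ℚ,a,b]}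
    (hf : Submodule.span ℤ (Set.range f) = traceZeroLattice O) :
    ∃ A : Matrix (Fin 3) (Fin 3) ℤ, (∀ s, Even (A s s)) ∧
      IsStructureMatrix (A.map (Int.cast : ℤ → ℚ)) f := by
  have hfL (k) : f k ∈ traceZeroLattice O := hf ▸ Submodule.subset_span ⟨k, rfl⟩
  choose c m n z hz hprod using fun s : Fin 3 =>
    exists_mul_eq_of_mem_traceZeroLattice htr hmul (hfL (s + 1)) (hfL (s + 2))
  choose e he using fun s =>
    (Submodule.mem_span_range_iff_exists_fun ℤ).mp (hf.symm ▸ hz s)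
  refine ⟨Matrix.of fun s k => (if k = s + 2 then m s else 0) + (if k = s + 1 then n s else 0) +
    2 * e s k, fun s => ?_, fun s => ?_⟩
  · fin_cases s <;> simp
  · rw [hprod, ← he]
    simp only [← Int.cast_smul_eq_zsmul ℚ, map_add, map_smul, map_sum, pureCoords_one, smul_zero,
      zero_add, Matrix.map_apply, Matrix.of_apply, Int.cast_add, Int.cast_ite, Int.cast_zero,
      add_smul, ite_smul, zero_smul, Finset.sum_add_distrib, Finset.sum_ite_eq', Finset.mem_univ,
      if_true, Finset.smul_sum, smul_smul, Int.cast_mul, Int.cast_ofNat]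

theorem exists_eq_smul_one_of_two_smul_eq (htr : ∀ x ∈ O, ∃ m : ℤ, trd x = m)
    (hmul : ∀ x ∈ O, ∀ y ∈ O, x * y ∈ O) {y : ℍ[ℚ,a,b]} (hy : y ∈ O) {s : ℤ}
    (h : 2 • y = s • (1 : ℍ[ℚ,a,b])) : ∃ e : ℤ, y = e • (1 : ℍ[ℚ,a,b]) := by
  obtain ⟨t, ht⟩ := htr _ (hmul y hy y hy)
  have hy2 : y = (s / 2 : ℚ) • (1 : ℍ[ℚ,a,b]) := by
    rw [div_eq_inv_mul, mul_smul, Int.cast_smul_eq_zsmul, ← h, ← ofNat_smul_eq_nsmul ℚ, smul_smul]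
    norm_num
  have hs : s ^ 2 = 2 * t := by
    have : (s : ℚ) ^ 2 = 2 * t := by
      rw [← ht, trd, hy2, smul_mul_smul_comm, one_mul, QuaternionAlgebra.re_smul,
        QuaternionAlgebra.re_one, smul_eq_mul]
      ring
    exact_mod_cast this
  obtain ⟨e, rfl⟩ := Int.prime_two.dvd_of_dvd_pow (Dvd.intro t hs.symm)
  refine ⟨e, ?_⟩
  rw [hy2, ← Int.cast_smul_eq_zsmul ℚ, Int.cast_mul, Int.cast_ofNat,
    mul_div_cancel_left₀ _ two_ne_zero]

theorem span_cons_one_eq (h1 : 1 ∈ O) (htr : ∀ x ∈ O, ∃ m : ℤ, trd x = m)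
    (hmul : ∀ x ∈ O, ∀ y ∈ O, x * y ∈ O) {f r : Fin 3 → ℍ[ℚ,a,b]} {m : Fin 3 → ℤ}
    (hf : Submodule.span ℤ (Set.range f) = traceZeroLattice O) (hr : ∀ k, r k ∈ O)
    (hfr : ∀ k, f k = m k • (1 : ℍ[ℚ,a,b]) + 2 • r k) :
    Submodule.span ℤ (Set.range (Fin.cons 1 r : Fin 4 → ℍ[ℚ,a,b])) = O := by
  rw [Fin.range_cons]
  refine le_antisymm (Submodule.span_le.mpr ?_) fun x hx => ?_
  · rintro _ (rfl | ⟨k, rfl⟩)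
    exacts [h1, hr k]
  · obtain ⟨t, ht⟩ := htr x hx
    have hxL := sub_star_mem_traceZeroLattice htr hx
    rw [← hf, Submodule.mem_span_range_iff_exists_fun] at hxL
    obtain ⟨n, hn⟩ := hxL
    have hxr : 2 • (x - ∑ k, n k • r k) = (t + ∑ k, n k * m k) • (1 : ℍ[ℚ,a,b]) := by
      rw [sub_star_eq_of_trd_eq ht, neg_smul] at hn
      simp only [hfr, Fin.sum_univ_three] at hn ⊢
      rw [smul_sub, eq_add_of_neg_add_eq hn.symm]
      module
    obtain ⟨e, he⟩ := exists_eq_smul_one_of_two_smul_eq htr hmul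
      (O.sub_mem hx (O.sum_mem fun k _ => O.smul_mem (n k) (hr k))) hxr
    rw [Submodule.mem_span_insert]
    refine ⟨e, _, Submodule.sum_mem _ fun k _ => Submodule.smul_mem _ (n k)
      (Submodule.subset_span ⟨k, rfl⟩), sub_eq_iff_eq_add.mp he⟩

theorem sq_coordMatrix_det_eq {N : ℕ} (hO : IsOrder O) (hdisc : HasReducedDiscriminant O N)
    {f : Fin 3 → ℍ[ℚ,a,b]} (hf : Submodule.span ℤ (Set.range f) = traceZeroLattice O) :
    (a * b * (coordMatrix f).det) ^ 2 = 4 * (N : ℚ) ^ 2 := by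
  obtain ⟨-, h1, hmul⟩ := hO
  have hfL (k) : f k ∈ traceZeroLattice O := hf ▸ Submodule.subset_span ⟨k, rfl⟩
  have hre (k) : (f k).re = 0 := re_eq_zero_of_mem_traceZeroLattice (hfL k)
  choose m r hr hfr using fun k => (hfL k).1
  have hspan := span_cons_one_eq h1 (fun x => exists_int_trd h1 hdisc) hmul hf hr hfr
  have hdetO : (gram (qbilForm a b) (Fin.cons 1 r : Fin 4 → ℍ[ℚ,a,b])).det = (N : ℚ) ^ 2 := by
    obtain ⟨A, ⟨v, -, hv, hA⟩, hdet⟩ := hdisc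
    have hAv : gram (qbilForm a b) v = A.map (Int.cast : ℤ → ℚ) := by
      ext i j
      exact (hA i j).symm
    rw [Submodule.span_eq, ← hspan] at hv
    rw [← det_gram_eq_of_span_eq _ hv, hAv, ← Int.cast_det, hdet]
    norm_cast
  have hfr' (k) : f k = (m k : ℚ) • (1 : ℍ[ℚ,a,b]) + (2 : ℚ) • r k := by
    rw [hfr, Int.cast_smul_eq_zsmul, two_smul, two_smul]
  have horth (k) : qbilForm a b 1 (f k) = 0 := by
    change qbil _ _ = _
    rw [qbil_one_left, trd, hre, mul_zero]
  have hone : qbilForm a b 1 1 = 2 := by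
    change qbil _ _ = _
    rw [qbil_one_left, trd, QuaternionAlgebra.re_one, mul_one]
  have h := det_gram_cons_smul_add_smul (qbilForm a b) 2 hfr'
  rw [det_gram_cons _ horth, hone, gram_qbilForm hre, Matrix.det_smul, det_pureGram, hdetO,
    Fintype.card_fin] at h
  linear_combination h / 16

theorem span_rat_traceZeroLattice (hO : Submodule.span ℚ (O : Set ℍ[ℚ,a,b]) = ⊤)
    (htr : ∀ x ∈ O, ∃ m : ℤ, trd x = m) :
    Submodule.span ℚ (traceZeroLattice O : Set ℍ[ℚ,a,b]) =
      LinearMap.ker (QuaternionAlgebra.reₗ a 0 b) := by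
  refine le_antisymm (Submodule.span_le.mpr fun x => re_eq_zero_of_mem_traceZeroLattice)
    fun x hx => ?_
  have hx0 : x.re = 0 := hx
  have hsub (y : ℍ[ℚ,a,b]) :
      y - star y ∈ Submodule.span ℚ (traceZeroLattice O : Set ℍ[ℚ,a,b]) := by
    have hy : y ∈ Submodule.span ℚ (O : Set ℍ[ℚ,a,b]) := hO ▸ Submodule.mem_top
    induction hy using Submodule.span_induction with
    | mem y hy => exact Submodule.subset_span (sub_star_mem_traceZeroLattice htr hy)
    | zero => simp
    | add y z _ _ hy hz => rw [star_add, add_sub_add_comm]; exact add_mem hy hz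
    | smul c y _ hy =>
      rw [QuaternionAlgebra.star_smul, ← smul_sub]
      exact Submodule.smul_mem _ c hy
  have hhalf : x = (1 / 2 : ℚ) • (x - star x) := by
    ext <;> simp [hx0] <;> ring
  exact hhalf ▸ Submodule.smul_mem _ _ (hsub x)

theorem finrank_ker_reₗ (a b : ℚ) :
    Module.finrank ℚ (LinearMap.ker (QuaternionAlgebra.reₗ a 0 b)) = 3 := by
  have hsurj : LinearMap.range (QuaternionAlgebra.reₗ a 0 b) = ⊤ :=
    LinearMap.range_eq_top.mpr fun t => ⟨t, rfl⟩
  have h := LinearMap.finrank_range_add_finrank_ker (QuaternionAlgebra.reₗ a 0 b)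
  rw [hsurj, finrank_top, Module.finrank_self, QuaternionAlgebra.finrank_eq_four] at h
  lia

theorem exists_isGramOf_traceZeroLattice {N : ℕ} (hO : IsOrder O)
    (hdisc : HasReducedDiscriminant O N) :
    ∃ G : Matrix (Fin 3) (Fin 3) ℤ, IsGramOf (traceZeroLattice O : Set ℍ[ℚ,a,b]) G := by
  obtain ⟨⟨v, hvli, hv⟩, h1, -⟩ := hO
  have htop : Submodule.span ℚ (O : Set ℍ[ℚ,a,b]) = ⊤ := by
    rw [← hv, Submodule.span_span_of_tower]
    exact hvli.span_eq_top_of_card_eq_finrank' (by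
      rw [QuaternionAlgebra.finrank_eq_four, Fintype.card_fin])
  have hle := traceZeroLattice_le h1
  have hfg : (traceZeroLattice O).FG := by
    have : IsNoetherian ℤ O := isNoetherian_of_fg_of_noetherian O
      (hv ▸ Submodule.fg_span (Set.finite_range v))
    exact isNoetherian_submodule.mp this _ hle
  have h := exists_linearIndependent_span_int_eq hfg
  rw [span_rat_traceZeroLattice htop fun x => exists_int_trd h1 hdisc, finrank_ker_reₗ] at h
  obtain ⟨f, hfli, hf⟩ := h
  have hfO (k) : f k ∈ O := hle (hf ▸ Submodule.subset_span ⟨k, rfl⟩)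
  choose G hG using fun i j => exists_int_qbil hdisc (hfO i) (hfO j)
  exact ⟨Matrix.of G, f, hfli, by rw [Submodule.span_eq, hf], fun i j => (hG i j).symm⟩

theorem exists_ternaryForm_of_isGramOf {N : ℕ} (hN : N ≠ 0) (hO : IsOrder O)
    (hdisc : HasReducedDiscriminant O N) {G : Matrix (Fin 3) (Fin 3) ℤ}
    (hG : IsGramOf (traceZeroLattice O : Set ℍ[ℚ,a,b]) G) :
    ∃ Q : TernaryForm ℤ, Q.halfDisc.natAbs = N ∧ G = (2 : ℤ) • Q.matrix.adjugate ∧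
      ∃ F : Matrix (Fin 3) (Fin 3) ℚ, F.det ≠ 0 ∧
        F * pureNormMatrix a b * Fᵀ = Q.matrix.adjugate.map (Int.cast : ℤ → ℚ) := by
  obtain ⟨f, -, hf, hGf⟩ := hG
  rw [Submodule.span_eq] at hf
  have hre (k) : (f k).re = 0 :=
    re_eq_zero_of_mem_traceZeroLattice (O := O) (hf ▸ Submodule.subset_span ⟨k, rfl⟩)
  have hsq := sq_coordMatrix_det_eq hO hdisc hf
  have hτ : a * b * (coordMatrix f).det ≠ 0 := by
    refine pow_ne_zero_iff two_ne_zero |>.mp (hsq ▸ ?_)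
    positivity
  obtain ⟨A, heven, hA⟩ :=
    exists_isStructureMatrix (fun x => exists_int_trd hO.2.1 hdisc) hO.2.2 hf
  have hAsymm : A.IsSymm :=
    Matrix.map_injective (Int.cast_injective (α := ℚ)) (hA.isSymm hre hτ)
  obtain ⟨Q, rfl⟩ := TernaryForm.exists_matrix_eq hAsymm heven
  have hadj : pureGram f = Q.matrix.adjugate.map (Int.cast : ℤ → ℚ) :=
    (hA.pureGram_eq_adjugate hre hτ).trans ((Int.castRingHom ℚ).map_adjugate Q.matrix).symm
  refine ⟨Q, ?_, ?_, coordMatrix f, right_ne_zero_of_mul hτ, hadj⟩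
  · have hdet : 2 * (Q.halfDisc : ℚ) = a * b * (coordMatrix f).det := by
      rw [← hA.det_eq hre hτ, ← Int.cast_det, Q.det_matrix]
      push_cast
      rfl
    have hsq' : Q.halfDisc ^ 2 = (N : ℤ) ^ 2 := by
      have : (Q.halfDisc : ℚ) ^ 2 = (N : ℚ) ^ 2 := by
        linear_combination (hsq + (2 * (Q.halfDisc : ℚ) + a * b * (coordMatrix f).det) * hdet) / 4
      exact_mod_cast this
    exact Int.natAbs_eq_iff_sq_eq.mpr hsq'
  · refine Matrix.map_injective (Int.cast_injective (α := ℚ)) ?_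
    have hGgram : G.map (Int.cast : ℤ → ℚ) = gram (qbilForm a b) f := Matrix.ext hGf
    refine hGgram.trans ?_
    rw [gram_qbilForm hre, hadj]
    ext i j
    simp only [Matrix.map_apply, Matrix.smul_apply, smul_eq_mul, Int.cast_mul, Int.cast_ofNat]

end Order

/-! ### Local representations by the ternary lattice -/

section Local

variable {p : ℕ} [hp : Fact p.Prime] {Q : TernaryForm ℤ} {d : ℤ}

theorem TernaryForm.exists_primitive_rep_iff (hd : IsFundamentalDiscriminant (-d)) :
    (∃ x : Fin 3 → ℤ_[p], (∃ i, IsUnit (x i)) ∧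
        x ⬝ᵥ ((2 : ℤ) • Q.matrix.adjugate).map (Int.cast : ℤ → ℤ_[p]) *ᵥ x =
          ((2 * d : ℤ) : ℤ_[p])) ↔
      (d : ℤ_[p]) ∈ Set.range (Q.map (Int.castRingHom ℤ_[p])).adjoint := by
  have hval (x : Fin 3 → ℤ_[p]) :
      x ⬝ᵥ ((2 : ℤ) • Q.matrix.adjugate).map (Int.cast : ℤ → ℤ_[p]) *ᵥ x =
        2 * (Q.map (Int.castRingHom ℤ_[p])).adjoint x := by
    have hmat : ((2 : ℤ) • Q.matrix.adjugate).map (Int.cast : ℤ → ℤ_[p]) =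
        (2 : ℤ_[p]) • (Q.map (Int.castRingHom ℤ_[p])).matrix.adjugate := by
      rw [TernaryForm.adjugate_matrix_map]
      ext i j
      simp only [Matrix.map_apply, Matrix.smul_apply, smul_eq_mul, Int.cast_mul, Int.cast_ofNat,
        eq_intCast]
    rw [hmat, Matrix.smul_mulVec, dotProduct_smul, TernaryForm.dotProduct_adjugate_mulVec,
      smul_eq_mul]
  have hd' : IsFundamentalAt (p : ℤ_[p]) (-(d : ℤ_[p])) := by
    simpa using hd.isFundamentalAt (p := p)
  simp only [hval, Int.cast_mul, Int.cast_ofNat, mul_right_inj' (two_ne_zero' ℤ_[p])]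
  exact ⟨fun ⟨x, _, hx⟩ => ⟨x, hx⟩,
    fun ⟨x, hx⟩ => ⟨x, TernaryForm.exists_isUnit_apply_of_adjoint_eq hd' hx, hx⟩⟩

theorem TernaryForm.mem_range_adjoint_map_iff (hsqf : Squarefree Q.halfDisc)
    (hd : IsFundamentalDiscriminant (-d)) :
    (d : ℤ_[p]) ∈ Set.range (Q.map (Int.castRingHom ℤ_[p])).adjoint ↔
      ((p : ℤ) ∣ Q.halfDisc →
        ((Q.map (Int.castRingHom ℤ_[p])).OneAddAdjointAnisotropic → ¬ SplitIn d p hp.out) ∧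
        (¬ (Q.map (Int.castRingHom ℤ_[p])).OneAddAdjointAnisotropic → ¬ InertIn d p hp.out)) := by
  have hd' : IsFundamentalAt (p : ℤ_[p]) (-(d : ℤ_[p])) := by
    simpa using hd.isFundamentalAt (p := p)
  have hN : (Q.map (Int.castRingHom ℤ_[p])).halfDisc = (Q.halfDisc : ℤ_[p]) :=
    Q.halfDisc_map _
  by_cases hp : (p : ℤ) ∣ Q.halfDisc
  · have hsq : ¬ (p : ℤ_[p]) ^ 2 ∣ (Q.halfDisc : ℤ_[p]) := fun h =>
      (Nat.prime_iff_prime_int.mp Fact.out).not_isUnit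
        (hsqf p (pow_two (p : ℤ) ▸ (PadicInt.pow_p_dvd_int_iff 2 _).mp h))
    rw [mem_range_adjoint_iff_of_dvd_halfDisc (hN ▸ dvd_intCast_padicInt_iff.mpr hp) (hN ▸ hsq) hd',
      splitIn_iff, inertIn_iff _ hd, dvd_intCast_padicInt_iff]
    grind
  · have hunit := isUnit_padicInt_iff_not_dvd.mpr (mt dvd_intCast_padicInt_iff.mp hp)
    exact iff_of_true (mem_range_adjoint_of_isUnit_halfDisc (hN ▸ hunit) hd'.1) (absurd · hp)

end Local

theorem locallyPrimitivelyRepresents_iff_of_isGramOf {a b : ℚ} {N : ℕ} (hN : Squarefree N)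
    {O : Submodule ℤ ℍ[ℚ,a,b]} (hO : IsOrder O) (hdisc : HasReducedDiscriminant O N)
    {G : Matrix (Fin 3) (Fin 3) ℤ} (hG : IsGramOf (traceZeroLattice O : Set ℍ[ℚ,a,b]) G)
    {d : ℤ} (hd : IsFundamentalDiscriminant (-d)) :
    LocallyPrimitivelyRepresents G d ↔ ∀ (p : ℕ) (hp : p.Prime), p ∣ N →
      (RamifiedAt a b p hp → ¬ SplitIn d p hp) ∧ (¬ RamifiedAt a b p hp → ¬ InertIn d p hp) := by
  obtain ⟨Q, rfl, rfl, F, hF, hQ⟩ := exists_ternaryForm_of_isGramOf hN.ne_zero hO hdisc hG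
  refine forall₂_congr fun p hp => ?_
  have : Fact p.Prime := ⟨hp⟩
  rw [ramifiedAt_iff_oneAddAdjointAnisotropic hF hQ, ← Int.natCast_dvd]
  exact (Q.exists_primitive_rep_iff hd).trans
    (Q.mem_range_adjoint_map_iff (Int.squarefree_natAbs.mp hN) hd)

theorem locally_primitively_represented_iff_split_inert_general {a b : ℚ} {N₁ N₂ : ℕ}
    (hsqf : Squarefree (N₁ * N₂))
    (hram : ∀ (p : ℕ) (hp : p.Prime), RamifiedAt a b p hp ↔ p ∣ N₁)
    {O : Submodule ℤ ℍ[ℚ,a,b]} (hO : IsOrder O) (hdisc : HasReducedDiscriminant O (N₁ * N₂))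
    {d : ℤ} (hd : IsFundamentalDiscriminant (-d)) :
    (∀ A : Matrix (Fin 3) (Fin 3) ℤ, IsGramOf (traceZeroLattice O : Set ℍ[ℚ,a,b]) A →
        LocallyPrimitivelyRepresents A d) ↔
      (∀ (p : ℕ) (hp : p.Prime), p ∣ N₁ → ¬ SplitIn d p hp) ∧
        (∀ (p : ℕ) (hp : p.Prime), p ∣ N₂ → ¬ InertIn d p hp) := by
  obtain ⟨G, hG⟩ := exists_isGramOf_traceZeroLattice hO hdisc
  have hcop (p : ℕ) (hp : p.Prime) (h₂ : p ∣ N₂) (h₁ : p ∣ N₁) : False :=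
    hp.prime.not_isUnit (hsqf p (mul_dvd_mul h₁ h₂))
  constructor
  · intro h
    have hloc := (locallyPrimitivelyRepresents_iff_of_isGramOf hsqf hO hdisc hG hd).mp (h G hG)
    simp only [hram] at hloc
    exact ⟨fun p hp h₁ => (hloc p hp (h₁.mul_right N₂)).1 h₁,
      fun p hp h₂ => (hloc p hp (h₂.mul_left N₁)).2 (hcop p hp h₂)⟩
  · rintro ⟨hsplit, hinert⟩ A hA
    rw [locallyPrimitivelyRepresents_iff_of_isGramOf hsqf hO hdisc hA hd]
    simp only [hram]
    exact fun p hp h => ⟨hsplit p hp, fun h₁ => hinert p hp ((hp.dvd_mul.mp h).resolve_left h₁)⟩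

/-- For a fundamental discriminant `-d`, `d` is represented primitively
over all `ℤ_p` by the ternary lattices `L_i` if and only if no prime `p ∣ N₁` is split in
`ℚ(√-d)` and no prime `p ∣ N₂` is inert in `ℚ(√-d)`. -/
theorem locally_primitively_represented_iff_split_inert (N₁ N₂ : ℕ)
    (S : EichlerSetting N₁ N₂) (d : ℕ) (hd : 0 < d)
    (hfund : IsFundamentalDiscriminant (-(d : ℤ))) :
    (∀ (i : Fin S.h) (A : Matrix (Fin 3) (Fin 3) ℤ), IsGramOf (S.L i) A →
        LocallyPrimitivelyRepresents A d) ↔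
      (∀ (p : ℕ) (hp : p.Prime), p ∣ N₁ → ¬ SplitIn d p hp) ∧
        (∀ (p : ℕ) (hp : p.Prime), p ∣ N₂ → ¬ InertIn d p hp) := by
  have : Nonempty (Fin S.h) := ⟨⟨0, S.h_pos⟩⟩
  exact (forall_congr' fun i => locally_primitively_represented_iff_split_inert_general
    S.squarefree S.ram_iff (S.Rord_order i) (S.Rord_disc i) hfund).trans (forall_const _)

end Rep
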